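/- arXiv:2410.06403 — 3 statements merged into one kernel-verified Lean document; each statement's English description precedes it below -/
import Mathlib

section
/- Let f satisfy Assumption A and let (a_n) be an admissible sequence (so a_n > 0 for all large n). Then (1/γ_{2n}) · f^{(2n)}(√(a_n) · z) → cos(z) as n → ∞, uniformly on compact subsets of the complex plane. -/
open Filter

/-- Multiplicity of `z` as a zero of the entire function `f`: the least `n` with
`f⁽ⁿ⁾(z) ≠ 0`. -/
noncomputable def zeroMult (f : ℂ → ℂ) (z : ℂ) : ℕ :=
  sInf {n : ℕ | iteratedDeriv n f z ≠ 0}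

/-- The number of zeros of `f` in `[0, r]`, counted with multiplicity. -/
noncomputable def nPlus (f : ℂ → ℂ) (r : ℝ) : ℝ :=
  ∑' x : {x : ℝ // 0 ≤ x ∧ x ≤ r ∧ f ((x : ℝ) : ℂ) = 0}, (zeroMult f (((x : ℝ) : ℂ)) : ℝ)

/-- `h` is positive and slowly varying: `h(xr)/h(r) → 1` as `r → ∞` for every `x > 0`. -/
def SlowlyVarying (h : ℝ → ℝ) : Prop :=
  (∀ r > 0, 0 < h r) ∧ ∀ x > 0, Tendsto (fun r => h (x * r) / h r) atTop (nhds 1)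

/-- Assumption A for an even entire function `f`, with exponent `α` and slowly varying `h`. -/
structure AssumptionA (f : ℂ → ℂ) (α : ℝ) (h : ℝ → ℝ) : Prop where
  entire : Differentiable ℂ f
  order : ∃ ρ < (2 : ℝ), ∃ C > (0 : ℝ), ∀ z, ‖f z‖ ≤ C * Real.exp (‖z‖ ^ ρ)
  even : ∀ z, f (-z) = f z
  realOnReal : ∀ x : ℝ, (f ((x : ℝ) : ℂ)).im = 0
  ne_zero : f 0 ≠ 0
  realZeros : ∀ z, f z = 0 → z.im = 0
  alpha_mem : α ∈ Set.Ioo (0 : ℝ) 2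
  slowly : SlowlyVarying h
  density : Tendsto (fun r : ℝ => nPlus f r / (h r * r ^ α)) atTop (nhds 1)

/-- `γ_k = f⁽ᵏ⁾(0)`, so that `f(z) = ∑ γ_{2k} z^{2k}/(2k)!`. -/
noncomputable def gam (f : ℂ → ℂ) (k : ℕ) : ℂ := iteratedDeriv k f 0

/- Hadamard's theorem and the reality of the zeros give `f z = f 0 * ∏ (1 - z² / x²)` over the
positive zeros `x`, so `c_n = |γ_{2n} / ((2n)! γ_0)|` is the `n`-th elementary symmetric function of
the inverse squares of these zeros. Up to tilting by a factor `t ^ n` and normalising, `(c_n)` is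
the law of a sum of independent Bernoulli variables. Its variance at the tilt centring it at `n` is
at least of the order of the number of zeros in a dyadic interval, which tends to infinity under
Assumption A. A local limit estimate then shows that the law is flat near its mode, i.e.
`c_n c_{n+2} / c_{n+1}² → 1`. Hence the ratios `b_n = -γ_{2n+2} / γ_{2n}` satisfy
`b_{n+1} / b_n → 1`, so the coefficient `∏_{j<k} a_n b_{n+j}` of `(-1)^k z^{2k} / (2k)!` in the
rescaled derivative tends to `1` for each `k`, and log-concavity of `(c_n)` dominates the series. -/

section GeneratingPolynomial

open Polynomial

/-- The polynomial `∏ (1 + y X)` over a multiset of reals: its coefficients are the elementary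
symmetric functions of the multiset and, for `y ≥ 0`, it is up to normalisation the generating
function of a sum of independent Bernoulli variables with odds `y`. -/
noncomputable def genPoly (s : Multiset ℝ) : ℝ[X] :=
  (s.map fun y => 1 + C y * X).prod

/-- The mean `∑ y / (1 + y)` of a sum of independent Bernoulli variables with odds `y`. -/
noncomputable def bernoulliSumMean (s : Multiset ℝ) : ℝ := (s.map fun y => y / (1 + y)).sum

/-- The variance `∑ y / (1 + y)²` of a sum of independent Bernoulli variables with odds `y`. -/
noncomputable def bernoulliSumVar (s : Multiset ℝ) : ℝ := (s.map fun y => y / (1 + y) ^ 2).sum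

@[simp]
lemma genPoly_zero : genPoly 0 = 1 := by
  simp [genPoly]

lemma genPoly_cons (y : ℝ) (s : Multiset ℝ) :
    genPoly (y ::ₘ s) = (1 + C y * X) * genPoly s := by
  simp [genPoly]

lemma genPoly_add (s u : Multiset ℝ) : genPoly (s + u) = genPoly s * genPoly u := by
  simp [genPoly]

lemma genPoly_cons_coeff_succ (y : ℝ) (s : Multiset ℝ) (n : ℕ) :
    (genPoly (y ::ₘ s)).coeff (n + 1) = (genPoly s).coeff (n + 1) + y * (genPoly s).coeff n := by
  simp [genPoly_cons, add_mul, mul_assoc]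

@[simp]
lemma genPoly_coeff_zero (s : Multiset ℝ) : (genPoly s).coeff 0 = 1 := by
  induction s using Multiset.induction with
  | empty => simp
  | cons y s ih => simp [genPoly_cons, mul_coeff_zero, ih]

lemma genPoly_coeff_nonneg {s : Multiset ℝ} (hs : ∀ y ∈ s, 0 ≤ y) (n : ℕ) :
    0 ≤ (genPoly s).coeff n := by
  induction s using Multiset.induction generalizing n with
  | empty => simp only [genPoly_zero, coeff_one]; split_ifs <;> norm_num
  | cons y s ih =>
    obtain ⟨hy, hs⟩ := Multiset.forall_mem_cons.1 hs
    cases n with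
    | zero => simp
    | succ n =>
      rw [genPoly_cons_coeff_succ]
      exact add_nonneg (ih hs _) (mul_nonneg hy (ih hs n))

lemma genPoly_coeff_pos {s : Multiset ℝ} (hs : ∀ y ∈ s, 0 < y) {n : ℕ} (hn : n ≤ s.card) :
    0 < (genPoly s).coeff n := by
  induction s using Multiset.induction generalizing n with
  | empty => simp [Nat.le_zero.1 hn]
  | cons y s ih =>
    obtain ⟨hy, hs⟩ := Multiset.forall_mem_cons.1 hs
    cases n with
    | zero => simp
    | succ n =>
      rw [genPoly_cons_coeff_succ]
      exact add_pos_of_nonneg_of_pos (genPoly_coeff_nonneg (fun z hz => (hs z hz).le) _)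
        (mul_pos hy (ih hs (by simpa using hn)))

lemma genPoly_coeff_le_of_le {s u : Multiset ℝ} (hsu : s ≤ u) (hu : ∀ y ∈ u, 0 ≤ y) (n : ℕ) :
    (genPoly s).coeff n ≤ (genPoly u).coeff n := by
  obtain ⟨v, rfl⟩ := Multiset.le_iff_exists_add.1 hsu
  have hs : ∀ y ∈ s, 0 ≤ y := fun y hy => hu y (Multiset.mem_add.2 (.inl hy))
  have hv : ∀ y ∈ v, 0 ≤ y := fun y hy => hu y (Multiset.mem_add.2 (.inr hy))
  rw [genPoly_add, coeff_mul]
  calc (genPoly s).coeff n = (genPoly s).coeff n * (genPoly v).coeff 0 := by simp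
    _ ≤ _ := Finset.single_le_sum
      (f := fun p : ℕ × ℕ => (genPoly s).coeff p.1 * (genPoly v).coeff p.2)
      (fun _ _ => mul_nonneg (genPoly_coeff_nonneg hs _) (genPoly_coeff_nonneg hv _))
      (a := (n, 0)) (by simp)

lemma genPoly_map_mul_coeff (t : ℝ) (s : Multiset ℝ) (n : ℕ) :
    (genPoly (s.map (t * ·))).coeff n = t ^ n * (genPoly s).coeff n := by
  induction s using Multiset.induction generalizing n with
  | empty => cases n <;> simp [coeff_one]
  | cons y s ih =>
    cases n with
    | zero => simp
    | succ n =>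
      rw [Multiset.map_cons, genPoly_cons_coeff_succ, genPoly_cons_coeff_succ, ih, ih]
      ring

lemma genPoly_coeff_logConcave {s : Multiset ℝ} (hs : ∀ y ∈ s, 0 ≤ y) {i j : ℕ} (hij : i ≤ j) :
    (genPoly s).coeff i * (genPoly s).coeff (j + 1) ≤
      (genPoly s).coeff (i + 1) * (genPoly s).coeff j := by
  induction s using Multiset.induction generalizing i j with
  | empty => simp [coeff_one]
  | cons y s ih =>
    obtain ⟨hy, hs⟩ := Multiset.forall_mem_cons.1 hs
    obtain rfl | hij := hij.eq_or_lt
    · rw [mul_comm]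
    obtain ⟨j, rfl⟩ : ∃ k, j = k + 1 := Nat.exists_eq_succ_of_ne_zero hij.ne_bot
    have hc := genPoly_coeff_nonneg hs
    have ih₁ : _ ≤ _ := ih hs hij.le
    cases i with
    | zero =>
      simp only [genPoly_cons_coeff_succ, genPoly_coeff_zero, one_mul, mul_one, zero_add] at ih₁ ⊢
      nlinarith [mul_nonneg hy (mul_nonneg (hc 1) (hc j)), mul_nonneg (mul_nonneg hy hy) (hc j)]
    | succ i =>
      have hij' : i < j := Nat.succ_lt_succ_iff.1 hij
      have ih₂ := mul_le_mul_of_nonneg_left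
        ((ih hs (Nat.le_succ_of_le hij'.le)).trans (ih hs (i := i + 1) hij')) hy
      have ih₃ := mul_le_mul_of_nonneg_left (ih hs hij'.le) (mul_nonneg hy hy)
      simp only [genPoly_cons_coeff_succ]
      nlinarith

lemma genPoly_coeff_le_of_coeff_eq_coeff_succ {s : Multiset ℝ} (hs : ∀ y ∈ s, 0 ≤ y) {n : ℕ}
    (hpos : 0 < (genPoly s).coeff n) (heq : (genPoly s).coeff n = (genPoly s).coeff (n + 1))
    (k : ℕ) : (genPoly s).coeff k ≤ (genPoly s).coeff n := by
  rcases le_total k n with hkn | hnk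
  · induction hkn using Nat.decreasingInduction with
    | self => exact le_rfl
    | of_succ k hk ih =>
      have hlc := genPoly_coeff_logConcave hs hk.le
      rw [← heq] at hlc
      exact (le_of_mul_le_mul_right hlc hpos).trans ih
  · induction k, hnk using Nat.le_induction with
    | base => exact le_rfl
    | succ k hk ih =>
      have hlc := genPoly_coeff_logConcave hs hk
      rw [← heq] at hlc
      exact (le_of_mul_le_mul_left hlc hpos).trans ih

lemma sum_sub_sq_mul_eq_eval_derivative {R : Type*} [CommRing R] (p : R[X]) (μ : R) :
    (p.sum fun k c => ((k : R) - μ) ^ 2 * c) =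
      (derivative (derivative p)).eval 1 + (1 - 2 * μ) * (derivative p).eval 1 +
        μ ^ 2 * p.eval 1 := by
  induction p using Polynomial.induction_on' with
  | add p q hp hq =>
    rw [sum_add_index _ _ _ (by simp) (by intros; ring), hp, hq]
    simp only [derivative_add, eval_add]
    ring
  | monomial k c =>
    rw [sum_monomial_index _ _ (by simp)]
    simp only [derivative_monomial, eval_monomial, one_pow, mul_one]
    cases k with
    | zero => simp
    | succ k => push_cast [Nat.add_sub_cancel]; ring

lemma genPoly_eval_one_pos {s : Multiset ℝ} (hs : ∀ y ∈ s, 0 ≤ y) : 0 < (genPoly s).eval 1 := by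
  induction s using Multiset.induction with
  | empty => simp
  | cons y s ih =>
    obtain ⟨hy, hs⟩ := Multiset.forall_mem_cons.1 hs
    rw [genPoly_cons, eval_mul]
    refine mul_pos ?_ (ih hs)
    simp only [eval_add, eval_one, eval_mul, eval_C, eval_X, mul_one]
    positivity

lemma genPoly_derivative_eval_one {s : Multiset ℝ} (hs : ∀ y ∈ s, 0 ≤ y) :
    (derivative (genPoly s)).eval 1 = bernoulliSumMean s * (genPoly s).eval 1 := by
  induction s using Multiset.induction with
  | empty => simp [bernoulliSumMean]
  | cons y s ih =>
    obtain ⟨hy, hs⟩ := Multiset.forall_mem_cons.1 hs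
    have hy' : 1 + y ≠ 0 := by positivity
    simp only [genPoly_cons, derivative_mul, derivative_add, derivative_one, derivative_C, zero_mul,
      derivative_X, mul_one, zero_add, eval_add, eval_mul, eval_C, eval_one, eval_X, ih hs,
      bernoulliSumMean, Multiset.map_cons, Multiset.sum_cons]
    field_simp

lemma genPoly_derivative_derivative_eval_one {s : Multiset ℝ} (hs : ∀ y ∈ s, 0 ≤ y) :
    (derivative (derivative (genPoly s))).eval 1 =
      (bernoulliSumVar s + bernoulliSumMean s ^ 2 - bernoulliSumMean s) * (genPoly s).eval 1 := by
  induction s using Multiset.induction with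
  | empty => simp [bernoulliSumMean, bernoulliSumVar]
  | cons y s ih =>
    obtain ⟨hy, hs⟩ := Multiset.forall_mem_cons.1 hs
    have hy' : 1 + y ≠ 0 := by positivity
    simp only [genPoly_cons, derivative_mul, derivative_add, derivative_one, derivative_C, zero_mul,
      derivative_X, mul_one, zero_add, eval_add, eval_mul, eval_C, genPoly_derivative_eval_one hs,
      bernoulliSumMean, eval_one, eval_X, ih hs, bernoulliSumVar, Multiset.map_cons,
      Multiset.sum_cons]
    field_simp
    ring

lemma genPoly_sum_sub_mean_sq_mul_coeff {s : Multiset ℝ} (hs : ∀ y ∈ s, 0 ≤ y) :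
    ∑ k ∈ (genPoly s).support, ((k : ℝ) - bernoulliSumMean s) ^ 2 * (genPoly s).coeff k =
      bernoulliSumVar s * (genPoly s).eval 1 := by
  have hsum := sum_sub_sq_mul_eq_eval_derivative (genPoly s) (bernoulliSumMean s)
  rw [genPoly_derivative_eval_one hs, genPoly_derivative_derivative_eval_one hs,
    Polynomial.sum_def] at hsum
  rw [hsum]
  ring

end GeneratingPolynomial

section Concentration

lemma card_filter_abs_sub_le (t : Finset ℕ) (μ : ℝ) {d : ℝ} (hd : 0 ≤ d) :
    (({k ∈ t | |(k : ℝ) - μ| ≤ d} : Finset ℕ).card : ℝ) ≤ 2 * d + 1 := by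
  rcases lt_or_ge (μ + d) 0 with hneg | hnn
  · rw [Finset.filter_eq_empty_iff.2 fun k _ hk => ?_]
    · rw [Finset.card_empty, Nat.cast_zero]; positivity
    · linarith [(abs_le.1 hk).2, Nat.cast_nonneg (α := ℝ) k]
  have hsub : ({k ∈ t | |(k : ℝ) - μ| ≤ d} : Finset ℕ) ⊆ Finset.Icc ⌈μ - d⌉₊ ⌊μ + d⌋₊ := by
    intro k hk
    obtain ⟨hlo, hhi⟩ := abs_le.1 (Finset.mem_filter.1 hk).2
    exact Finset.mem_Icc.2 ⟨Nat.ceil_le.2 (by linarith), Nat.le_floor (by linarith)⟩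
  have hcard := Finset.card_le_card hsub
  rw [Nat.card_Icc] at hcard
  have hlo := Nat.le_ceil (μ - d)
  have hhi := Nat.floor_le hnn
  rcases le_total ⌈μ - d⌉₊ (⌊μ + d⌋₊ + 1) with hle | hle
  · have := (Nat.cast_le (α := ℝ)).2 hcard
    push_cast [Nat.cast_sub hle] at this
    linarith
  · rw [Nat.sub_eq_zero_of_le hle, Nat.le_zero] at hcard
    rw [hcard, Nat.cast_zero]
    positivity

lemma sum_le_seven_mul_sqrt_mul_of_variance_le {t : Finset ℕ} {w : ℕ → ℝ} {μ V M : ℝ}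
    (hw : ∀ k, 0 ≤ w k) (hM : ∀ k, w k ≤ M) (hV : 1 ≤ V)
    (hvar : ∑ k ∈ t, ((k : ℝ) - μ) ^ 2 * w k ≤ V * ∑ k ∈ t, w k) :
    ∑ k ∈ t, w k ≤ 7 * √V * M := by
  have hV₀ : 0 < V := one_pos.trans_le hV
  have hσ : 1 ≤ √V := Real.one_le_sqrt.2 hV
  have hM₀ : 0 ≤ M := (hw 0).trans (hM 0)
  set near : Finset ℕ := {k ∈ t | |(k : ℝ) - μ| ≤ 2 * √V}
  have hweight : ∀ k ∈ t, w k - ((k : ℝ) - μ) ^ 2 * w k / (4 * V) ≤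
      if |(k : ℝ) - μ| ≤ 2 * √V then M else 0 := by
    intro k _
    split_ifs with hk
    · have : 0 ≤ ((k : ℝ) - μ) ^ 2 * w k / (4 * V) := by have := hw k; positivity
      linarith [hM k]
    · have hfar : 4 * V ≤ ((k : ℝ) - μ) ^ 2 := by
        rw [← sq_abs]
        nlinarith [Real.sq_sqrt hV₀.le, not_le.1 hk, Real.sqrt_nonneg V]
      rw [sub_nonpos, le_div_iff₀ (by positivity), mul_comm]
      exact mul_le_mul_of_nonneg_right hfar (hw k)
  have hnear : 3 / 4 * ∑ k ∈ t, w k ≤ near.card * M := by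
    calc 3 / 4 * ∑ k ∈ t, w k = ∑ k ∈ t, w k - V * (∑ k ∈ t, w k) / (4 * V) := by
          field_simp; ring
      _ ≤ ∑ k ∈ t, w k - (∑ k ∈ t, ((k : ℝ) - μ) ^ 2 * w k) / (4 * V) := by gcongr
      _ = ∑ k ∈ t, (w k - ((k : ℝ) - μ) ^ 2 * w k / (4 * V)) := by
          rw [Finset.sum_sub_distrib, Finset.sum_div]
      _ ≤ ∑ k ∈ t, if |(k : ℝ) - μ| ≤ 2 * √V then M else 0 := Finset.sum_le_sum hweight
      _ = near.card * M := by rw [← Finset.sum_filter, Finset.sum_const, nsmul_eq_mul]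
  have hcard : (near.card : ℝ) ≤ 5 * √V :=
    (card_filter_abs_sub_le t μ (by positivity)).trans (by linarith)
  nlinarith [mul_le_mul_of_nonneg_right hcard hM₀, mul_nonneg (Real.sqrt_nonneg V) hM₀]

lemma genPoly_eval_one_le {s : Multiset ℝ} (hs : ∀ y ∈ s, 0 ≤ y) (hV : 1 ≤ bernoulliSumVar s)
    {M : ℝ} (hM : ∀ k, (genPoly s).coeff k ≤ M) :
    (genPoly s).eval 1 ≤ 7 * √(bernoulliSumVar s) * M := by
  have heval : (genPoly s).eval 1 = ∑ k ∈ (genPoly s).support, (genPoly s).coeff k := by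
    simp [Polynomial.eval_eq_sum, Polynomial.sum_def]
  have hvar := (genPoly_sum_sub_mean_sq_mul_coeff hs).le
  rw [heval] at hvar ⊢
  exact sum_le_seven_mul_sqrt_mul_of_variance_le (genPoly_coeff_nonneg hs) hM hV hvar

end Concentration

section LocalLimit

open Polynomial

lemma two_pi_mul_norm_coeff_le (p : ℂ[X]) (n : ℕ) :
    2 * Real.pi * ‖p.coeff n‖ ≤
      ∫ θ in -Real.pi..Real.pi, ‖p.eval (Complex.exp (θ * Complex.I))‖ := by
  have : Fact (0 < 2 * Real.pi) := ⟨Real.two_pi_pos⟩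
  have hnorm (θ : ℝ) : ‖fourier (-(n : ℤ)) (θ : AddCircle (2 * Real.pi)) • p.toAddCircle θ‖ =
      ‖p.eval (Complex.exp (θ * Complex.I))‖ := by
    rw [norm_smul, fourier_apply, Circle.norm_coe, one_mul]
    simp [toAddCircle, AddCircle.toCircle_apply_mk]
  rw [← p.fourierCoeff_toAddCircle_natCast, fourierCoeff_eq_intervalIntegral _ _ (-Real.pi),
    norm_smul, Real.norm_of_nonneg (by positivity), ← mul_assoc, mul_one_div_cancel this.out.ne',
    one_mul, show -Real.pi + 2 * Real.pi = Real.pi by ring]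
  simpa only [hnorm] using intervalIntegral.norm_integral_le_integral_norm
    (f := fun θ : ℝ => fourier (-(n : ℤ)) (θ : AddCircle (2 * Real.pi)) • p.toAddCircle θ)
    (neg_le_self Real.pi_pos.le)

lemma integral_abs_mul_exp_neg_mul_sq {b : ℝ} (hb : 0 < b) :
    ∫ θ : ℝ, |θ| * Real.exp (-b * θ ^ 2) = 1 / b := by
  have hhalf : ∫ θ in Set.Ioi (0 : ℝ), θ * Real.exp (-b * θ ^ 2) = (2 * b)⁻¹ := by
    have := integral_mul_cexp_neg_mul_sq (b := b) (by simpa using hb)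
    exact_mod_cast this
  have habs := integral_comp_abs (f := fun θ : ℝ => θ * Real.exp (-b * θ ^ 2))
  simp only [sq_abs] at habs
  rw [habs, hhalf]
  field_simp

lemma intervalIntegral_abs_mul_exp_neg_mul_sq_le {b c : ℝ} (hb : 0 < b) (hc : 0 ≤ c) :
    ∫ θ in -c..c, |θ| * Real.exp (-b * θ ^ 2) ≤ 1 / b := by
  have hint : MeasureTheory.Integrable fun θ : ℝ => |θ| * Real.exp (-b * θ ^ 2) := by
    simpa [abs_mul] using (integrable_mul_exp_neg_mul_sq hb).abs
  rw [← integral_abs_mul_exp_neg_mul_sq hb, intervalIntegral.integral_of_le (neg_le_self hc)]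
  exact MeasureTheory.setIntegral_le_integral hint (Eventually.of_forall fun θ => by positivity)

lemma norm_one_add_mul_exp_le {y : ℝ} (hy : 0 ≤ y) (θ : ℝ) :
    ‖(1 : ℂ) + y * Complex.exp (θ * Complex.I)‖ ≤
      (1 + y) * Real.exp (-(y / (1 + y) ^ 2 * (1 - Real.cos θ))) := by
  set x := y / (1 + y) ^ 2 * (1 - Real.cos θ) with hx
  have hy' : 1 + y ≠ 0 := by positivity
  have hnorm : ‖(1 : ℂ) + y * Complex.exp (θ * Complex.I)‖ ^ 2 = (1 + y) ^ 2 * (-(2 * x) + 1) := by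
    rw [Complex.sq_norm, Complex.normSq_apply]
    simp only [Complex.add_re, Complex.one_re, Complex.add_im, Complex.one_im,
      Complex.re_ofReal_mul, Complex.im_ofReal_mul, Complex.exp_ofReal_mul_I_re,
      Complex.exp_ofReal_mul_I_im]
    rw [hx]
    field_simp
    linear_combination y ^ 2 * Real.sin_sq_add_cos_sq θ
  refine le_of_sq_le_sq ?_ (by positivity)
  calc ‖(1 : ℂ) + y * Complex.exp (θ * Complex.I)‖ ^ 2 = (1 + y) ^ 2 * (-(2 * x) + 1) := hnorm
    _ ≤ (1 + y) ^ 2 * Real.exp (-(2 * x)) := by gcongr; exact Real.add_one_le_exp _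
    _ = ((1 + y) * Real.exp (-x)) ^ 2 := by rw [mul_pow, ← Real.exp_nat_mul]; congr 2; ring

lemma norm_aeval_genPoly_exp_le {s : Multiset ℝ} (hs : ∀ y ∈ s, 0 ≤ y) (θ : ℝ) :
    ‖aeval (Complex.exp (θ * Complex.I)) (genPoly s)‖ ≤
      (genPoly s).eval 1 * Real.exp (-(bernoulliSumVar s * (1 - Real.cos θ))) := by
  induction s using Multiset.induction with
  | empty => simp [bernoulliSumVar]
  | cons y s ih =>
    obtain ⟨hy, hs⟩ := Multiset.forall_mem_cons.1 hs
    have hvar : bernoulliSumVar (y ::ₘ s) = y / (1 + y) ^ 2 + bernoulliSumVar s := by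
      simp [bernoulliSumVar]
    have hfactor : aeval (Complex.exp (θ * Complex.I)) (1 + C y * X : ℝ[X]) =
        1 + y * Complex.exp (θ * Complex.I) := by simp
    rw [genPoly_cons, map_mul, norm_mul, hfactor]
    refine (mul_le_mul (norm_one_add_mul_exp_le hy θ) (ih hs) (norm_nonneg _)
      (by positivity)).trans_eq ?_
    rw [mul_mul_mul_comm, ← Real.exp_add, hvar, eval_mul]
    congr 2
    · simp
    · ring

lemma norm_aeval_genPoly_exp_le_gaussian {s : Multiset ℝ} (hs : ∀ y ∈ s, 0 ≤ y) {θ : ℝ}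
    (hθ : |θ| ≤ Real.pi) :
    ‖aeval (Complex.exp (θ * Complex.I)) (genPoly s)‖ ≤
      (genPoly s).eval 1 * Real.exp (-(2 * bernoulliSumVar s / Real.pi ^ 2) * θ ^ 2) := by
  have hvar : 0 ≤ bernoulliSumVar s := Multiset.sum_nonneg fun v hv => by
    obtain ⟨y, hy, rfl⟩ := Multiset.mem_map.1 hv
    have := hs y hy
    positivity
  refine (norm_aeval_genPoly_exp_le hs θ).trans
    (mul_le_mul_of_nonneg_left (Real.exp_le_exp.2 ?_) (genPoly_eval_one_pos hs).le)
  have hcos : 2 / Real.pi ^ 2 * θ ^ 2 ≤ 1 - Real.cos θ := by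
    linarith [Real.cos_le_one_sub_mul_cos_sq hθ]
  calc -(bernoulliSumVar s * (1 - Real.cos θ))
      ≤ -(bernoulliSumVar s * (2 / Real.pi ^ 2 * θ ^ 2)) :=
        neg_le_neg (mul_le_mul_of_nonneg_left hcos hvar)
    _ = _ := by ring

lemma genPoly_coeff_succ_sub_coeff_le {s : Multiset ℝ} (hs : ∀ y ∈ s, 0 ≤ y)
    (hV : 0 < bernoulliSumVar s) (n : ℕ) :
    (genPoly s).coeff (n + 1) - (genPoly s).coeff n ≤
      (genPoly s).eval 1 * (Real.pi / (4 * bernoulliSumVar s)) := by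
  set V := bernoulliSumVar s
  set q : ℂ[X] := (1 - X) * (genPoly s).map (algebraMap ℝ ℂ) with hq
  have hcoeff : q.coeff (n + 1) = ((genPoly s).coeff (n + 1) - (genPoly s).coeff n : ℝ) := by
    simp [hq, sub_mul]
  have hpt : ∀ θ ∈ Set.Icc (-Real.pi) Real.pi, ‖q.eval (Complex.exp (θ * Complex.I))‖ ≤
      (genPoly s).eval 1 * (|θ| * Real.exp (-(2 * V / Real.pi ^ 2) * θ ^ 2)) := by
    intro θ hθ
    have hfactor : ‖1 - Complex.exp (θ * Complex.I)‖ ≤ |θ| := by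
      rw [norm_sub_rev, mul_comm]
      exact Real.norm_exp_I_mul_ofReal_sub_one_le
    rw [hq, eval_mul, norm_mul, eval_map_algebraMap, mul_left_comm]
    refine mul_le_mul (by simpa using hfactor) ?_ (norm_nonneg _) (abs_nonneg θ)
    exact norm_aeval_genPoly_exp_le_gaussian hs (abs_le.2 hθ)
  have hbound : 2 * Real.pi * ((genPoly s).coeff (n + 1) - (genPoly s).coeff n) ≤
      (genPoly s).eval 1 * (1 / (2 * V / Real.pi ^ 2)) := by
    calc 2 * Real.pi * ((genPoly s).coeff (n + 1) - (genPoly s).coeff n)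
        ≤ 2 * Real.pi * ‖q.coeff (n + 1)‖ := by
          rw [hcoeff, Complex.norm_real]
          gcongr
          exact Real.le_norm_self _
      _ ≤ ∫ θ in -Real.pi..Real.pi, ‖q.eval (Complex.exp (θ * Complex.I))‖ :=
          two_pi_mul_norm_coeff_le q (n + 1)
      _ ≤ ∫ θ in -Real.pi..Real.pi,
            (genPoly s).eval 1 * (|θ| * Real.exp (-(2 * V / Real.pi ^ 2) * θ ^ 2)) :=
          intervalIntegral.integral_mono_on (neg_le_self Real.pi_pos.le)
            (Continuous.intervalIntegrable (by fun_prop) _ _)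
            (Continuous.intervalIntegrable (by fun_prop) _ _) hpt
      _ ≤ _ := by
          rw [intervalIntegral.integral_const_mul]
          exact mul_le_mul_of_nonneg_left (intervalIntegral_abs_mul_exp_neg_mul_sq_le
            (by positivity) Real.pi_pos.le) (genPoly_eval_one_pos hs).le
  refine le_of_mul_le_mul_left (hbound.trans_eq ?_) Real.two_pi_pos
  field_simp
  ring

lemma genPoly_coeff_succ_sub_coeff_le_of_coeff_eq {s : Multiset ℝ} (hs : ∀ y ∈ s, 0 ≤ y) {n : ℕ}
    (hV : 1 ≤ bernoulliSumVar s) (hpos : 0 < (genPoly s).coeff (n + 1))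
    (heq : (genPoly s).coeff (n + 1) = (genPoly s).coeff (n + 2)) :
    (genPoly s).coeff (n + 1) - (genPoly s).coeff n ≤
      6 / √(bernoulliSumVar s) * (genPoly s).coeff (n + 1) := by
  set V := bernoulliSumVar s
  set M := (genPoly s).coeff (n + 1)
  have hV₀ : 0 < V := one_pos.trans_le hV
  calc M - (genPoly s).coeff n
      ≤ (genPoly s).eval 1 * (Real.pi / (4 * V)) := genPoly_coeff_succ_sub_coeff_le hs hV₀ n
    _ ≤ 7 * √V * M * (Real.pi / (4 * V)) := by
        gcongr
        exact genPoly_eval_one_le hs hV (genPoly_coeff_le_of_coeff_eq_coeff_succ hs hpos heq)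
    _ = 7 * Real.pi / 4 * (√V / V) * M := by ring
    _ = 7 * Real.pi / 4 / √V * M := by rw [Real.sqrt_div_self]; ring
    _ ≤ 6 / √V * M := by
        gcongr
        linarith [Real.pi_lt_d2]

/- Tilting the weights by `c (n + 1) / c (n + 2)` makes `c (n + 1)` a maximal coefficient without
changing the ratio `c n * c (n + 2) / c (n + 1) ^ 2`. -/
lemma genPoly_coeff_sq_sub_le {s : Multiset ℝ} (hs : ∀ y ∈ s, 0 ≤ y) {n : ℕ} {t V : ℝ}
    (hV : 1 ≤ V) (hpos : 0 < (genPoly s).coeff (n + 1)) (ht : 0 < t)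
    (htilt : t * (genPoly s).coeff (n + 2) = (genPoly s).coeff (n + 1))
    (hvar : V ≤ bernoulliSumVar (s.map (t * ·))) :
    (genPoly s).coeff (n + 1) ^ 2 - (genPoly s).coeff n * (genPoly s).coeff (n + 2) ≤
      6 / √V * (genPoly s).coeff (n + 1) ^ 2 := by
  have hs' : ∀ y ∈ s.map (t * ·), 0 ≤ y := by
    intro y hy
    obtain ⟨x, hx, rfl⟩ := Multiset.mem_map.1 hy
    exact mul_nonneg ht.le (hs x hx)
  have htilted := genPoly_coeff_succ_sub_coeff_le_of_coeff_eq hs' (n := n) (hV.trans hvar)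
    (by rw [genPoly_map_mul_coeff]; positivity)
    (by simp only [genPoly_map_mul_coeff, pow_succ]; rw [← htilt]; ring)
  have hsqrt : 6 / √(bernoulliSumVar (s.map (t * ·))) ≤ 6 / √V :=
    div_le_div_of_nonneg_left (by norm_num) (Real.sqrt_pos.2 (one_pos.trans_le hV))
      (Real.sqrt_le_sqrt hvar)
  simp only [genPoly_map_mul_coeff, pow_succ] at htilted
  set c := (genPoly s).coeff
  have hdiff : t * c (n + 1) - c n ≤ 6 / √V * (t * c (n + 1)) := by
    refine le_of_mul_le_mul_left ?_ (pow_pos ht n)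
    have := mul_le_mul_of_nonneg_right hsqrt (by positivity : 0 ≤ t ^ n * t * c (n + 1))
    linarith
  have hc : 0 ≤ c (n + 2) := genPoly_coeff_nonneg hs _
  calc c (n + 1) ^ 2 - c n * c (n + 2) = (t * c (n + 1) - c n) * c (n + 2) := by
        linear_combination -c (n + 1) * htilt
    _ ≤ 6 / √V * (t * c (n + 1)) * c (n + 2) := mul_le_mul_of_nonneg_right hdiff hc
    _ = 6 / √V * c (n + 1) ^ 2 := by linear_combination 6 / √V * c (n + 1) * htilt

end LocalLimit

section EvenFactorization

lemma differentiable_dslope {g : ℂ → ℂ} (hg : Differentiable ℂ g) (b : ℂ) :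
    Differentiable ℂ (dslope g b) :=
  differentiableOn_univ.1 ((Complex.differentiableOn_dslope univ_mem).2 hg.differentiableOn)

lemma exists_even_quotient_of_apply_eq_zero {f : ℂ → ℂ} (hf : Differentiable ℂ f)
    (hev : Function.Even f) {a : ℂ} (ha : a ≠ 0) (hfa : f a = 0) :
    ∃ q : ℂ → ℂ, Differentiable ℂ q ∧ Function.Even q ∧ ∀ z, f z = (1 - z ^ 2 / a ^ 2) * q z := by
  set g := dslope f a
  have hfg (z : ℂ) : f z = (z - a) * g z := (sub_smul_dslope_of_zero hfa z).symm
  have hga : g (-a) = 0 := by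
    have hne : -a - a ≠ 0 := fun h => ha (by linear_combination (-1 / 2) * h)
    exact (mul_eq_zero.1 ((hfg (-a)).symm.trans ((hev a).trans hfa))).resolve_left hne
  set k := dslope g (-a)
  have hgk (z : ℂ) : g z = (z + a) * k z := by
    simpa using (sub_smul_dslope_of_zero hga z).symm
  have hk : Differentiable ℂ k := differentiable_dslope (differentiable_dslope hf a) (-a)
  have hfk (z : ℂ) : f z = (1 - z ^ 2 / a ^ 2) * (-a ^ 2 * k z) := by
    rw [hfg, hgk]
    field_simp
    ring
  clear_value k
  refine ⟨fun z => -a ^ 2 * k z, hk.const_mul _, fun z => ?_, hfk⟩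
  have hkc := hk.continuous
  have hdense : Dense ({a, -a} : Set ℂ)ᶜ := (Set.toFinite _).countable.dense_compl ℂ
  refine congrFun (Continuous.ext_on (f := fun z => -a ^ 2 * k (-z)) hdense
    (g := fun z => -a ^ 2 * k z) (by fun_prop) (by fun_prop) fun w hw => ?_) z
  have hw' : 1 - w ^ 2 / a ^ 2 ≠ 0 := by
    rw [sub_ne_zero, Ne, eq_comm, div_eq_one_iff_eq (pow_ne_zero 2 ha), sq_eq_sq_iff_eq_or_eq_neg]
    exact hw
  have := (hfk (-w)).symm.trans ((hev w).trans (hfk w))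
  rw [neg_sq] at this
  exact mul_left_cancel₀ hw' this

/-- The even polynomial `∏ (1 - z² / x²)` with zeros at `±x`, for `x` in a multiset of nonzero
reals. -/
noncomputable def zeroProd (s : Multiset ℝ) (z : ℂ) : ℂ :=
  (s.map fun x : ℝ => 1 - z ^ 2 / (x : ℂ) ^ 2).prod

lemma zeroProd_cons (x : ℝ) (s : Multiset ℝ) :
    zeroProd (x ::ₘ s) = (fun z => 1 - z ^ 2 / (x : ℂ) ^ 2) * zeroProd s := by
  ext z
  simp [zeroProd]

lemma zeroProd_apply_zero (s : Multiset ℝ) : zeroProd s 0 = 1 := by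
  simp [zeroProd]

lemma differentiable_zeroProd (s : Multiset ℝ) : Differentiable ℂ (zeroProd s) := by
  induction s using Multiset.induction with
  | empty => exact differentiable_const (1 : ℂ)
  | cons x s ih =>
    rw [zeroProd_cons]
    exact Differentiable.mul (by fun_prop) ih

lemma zeroProd_eq_aeval_genPoly (s : Multiset ℝ) (z : ℂ) :
    zeroProd s z = Polynomial.aeval (-z ^ 2) (genPoly (s.map fun x => (x ^ 2)⁻¹)) := by
  simp [zeroProd, genPoly, map_multiset_prod, div_eq_inv_mul, sub_eq_add_neg]

lemma analyticOrderAt_one_sub_sq_div_sq {x y : ℝ} (hx : 0 < x) (hy : 0 < y) :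
    analyticOrderAt (fun z : ℂ => 1 - z ^ 2 / (y : ℂ) ^ 2) x = if x = y then 1 else 0 := by
  have hana : AnalyticAt ℂ (fun z : ℂ => 1 - z ^ 2 / (y : ℂ) ^ 2) x :=
    Differentiable.analyticAt (by fun_prop) _
  have hy' : (y : ℂ) ≠ 0 := Complex.ofReal_ne_zero.2 hy.ne'
  split_ifs with hxy
  · subst hxy
    refine hana.analyticOrderAt_eq_one_of_zero_deriv_ne_zero (by simp [hy']) ?_
    simp [hy']
  · rw [hana.analyticOrderAt_eq_zero, sub_ne_zero, Ne, eq_comm,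
      div_eq_one_iff_eq (pow_ne_zero 2 hy')]
    exact_mod_cast fun h => hxy ((sq_eq_sq₀ hx.le hy.le).1 h)

lemma analyticOrderAt_zeroProd {s : Multiset ℝ} (hs : ∀ x ∈ s, 0 < x) {x : ℝ} (hx : 0 < x) :
    analyticOrderAt (zeroProd s) x = s.count x := by
  induction s using Multiset.induction with
  | empty =>
    simp [((differentiable_zeroProd 0).analyticAt _).analyticOrderAt_eq_zero, zeroProd]
  | cons y s ih =>
    obtain ⟨hy, hs⟩ := Multiset.forall_mem_cons.1 hs
    rw [zeroProd_cons, analyticOrderAt_mul (Differentiable.analyticAt (by fun_prop) _)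
      ((differentiable_zeroProd s).analyticAt _), analyticOrderAt_one_sub_sq_div_sq hx hy, ih hs,
      Multiset.count_cons]
    split_ifs <;> simp [add_comm]

lemma exists_eq_zeroProd_mul {f : ℂ → ℂ} (hf : Differentiable ℂ f) (hev : Function.Even f)
    {s : Multiset ℝ} (hs : ∀ x ∈ s, 0 < x)
    (hcount : ∀ x ∈ s, (s.count x : ℕ∞) ≤ analyticOrderAt f x) :
    ∃ q : ℂ → ℂ, Differentiable ℂ q ∧ Function.Even q ∧ f = zeroProd s * q := by
  induction s using Multiset.induction with
  | empty => exact ⟨f, hf, hev, by ext z; simp [zeroProd]⟩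
  | cons a s ih =>
    obtain ⟨ha, hs⟩ := Multiset.forall_mem_cons.1 hs
    have hle (x : ℝ) : (s.count x : ℕ∞) ≤ (a ::ₘ s).count x :=
      Nat.cast_le.2 (Multiset.count_le_count_cons x a s)
    obtain ⟨q, hq, hqe, hfq⟩ := ih hs fun x hx =>
      (hle x).trans (hcount x (Multiset.mem_cons_of_mem hx))
    have hqa : q a = 0 := by
      refine apply_eq_zero_of_analyticOrderAt_ne_zero fun hord => ?_
      have hlt := hcount a (Multiset.mem_cons_self a s)
      rw [hfq, analyticOrderAt_mul ((differentiable_zeroProd s).analyticAt _) (hq.analyticAt _),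
        analyticOrderAt_zeroProd hs ha, hord, add_zero, Multiset.count_cons_self,
        Nat.cast_le] at hlt
      omega
    obtain ⟨q', hq', hqe', hqq'⟩ := exists_even_quotient_of_apply_eq_zero hq hqe
      (Complex.ofReal_ne_zero.2 ha.ne') hqa
    refine ⟨q', hq', hqe', ?_⟩
    rw [zeroProd_cons, hfq]
    ext z
    simp only [Pi.mul_apply, hqq' z]
    ring

lemma exists_eq_zeroProd_mul_of_count_eq {f : ℂ → ℂ} (hf : Differentiable ℂ f)
    (hev : Function.Even f) {s : Multiset ℝ} (hs : ∀ x ∈ s, 0 < x)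
    (hcount : ∀ x ∈ s, analyticOrderAt f x = s.count x) :
    ∃ q : ℂ → ℂ, Differentiable ℂ q ∧ Function.Even q ∧ f = zeroProd s * q ∧
      ∀ x ∈ s, q x ≠ 0 := by
  obtain ⟨q, hq, hqe, hfq⟩ := exists_eq_zeroProd_mul hf hev hs fun x hx => (hcount x hx).ge
  refine ⟨q, hq, hqe, hfq, fun x hx => ?_⟩
  have hord := hcount x hx
  rw [hfq, analyticOrderAt_mul ((differentiable_zeroProd s).analyticAt _) (hq.analyticAt _),
    analyticOrderAt_zeroProd hs (hs x hx)] at hord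
  rw [← (hq.analyticAt _).analyticOrderAt_eq_zero]
  exact (ENat.addLECancellable_of_ne_top (ENat.natCast_ne_top _)).inj.1
    (hord.trans (add_zero _).symm)

end EvenFactorization

section ZeroFreeEven

open Metric

lemma exists_eq_mul_exp_of_forall_ne_zero {q : ℂ → ℂ} {R : ℝ} (hR : 0 < R)
    (hq : DifferentiableOn ℂ q (ball 0 R)) (hne : ∀ z ∈ ball (0 : ℂ) R, q z ≠ 0) :
    ∃ L : ℂ → ℂ, L 0 = 0 ∧ (∀ z ∈ ball (0 : ℂ) R, HasDerivAt L (deriv q z / q z) z) ∧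
      ∀ z ∈ ball (0 : ℂ) R, q z = q 0 * Complex.exp (L z) := by
  have hlogDeriv : DifferentiableOn ℂ (fun z => deriv q z / q z) (ball 0 R) :=
    (hq.deriv isOpen_ball).div hq hne
  obtain ⟨L, hL₀, hL⟩ := hlogDeriv.isExactOn_ball.with_val_at 0 0
  refine ⟨L, hL₀, hL, fun z hz => ?_⟩
  have hderiv : ∀ w ∈ ball (0 : ℂ) R, HasDerivAt (fun w => q w * Complex.exp (-L w)) 0 w := by
    intro w hw
    have hqw := (hq.differentiableAt (isOpen_ball.mem_nhds hw)).hasDerivAt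
    refine (hqw.mul (hL w hw).fun_neg.cexp).congr_deriv ?_
    have := hne w hw
    field_simp
    ring
  have hconst : q z * Complex.exp (-L z) = q 0 * Complex.exp (-L 0) :=
    (convex_ball (0 : ℂ) R).is_const_of_fderivWithin_eq_zero (𝕜 := ℂ)
      (fun w hw => (hderiv w hw).differentiableAt.differentiableWithinAt)
      (fun w hw => by
        rw [fderivWithin_of_isOpen isOpen_ball hw]
        ext
        simp [(hderiv w hw).deriv]) hz (mem_ball_self hR)
  rw [hL₀, neg_zero, Complex.exp_zero, mul_one] at hconst
  rw [← hconst, mul_assoc, ← Complex.exp_add, neg_add_cancel, Complex.exp_zero, mul_one]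

/- Borel–Carathéodory bounds `L` on half the disc; since `L` vanishes to second order, the Schwarz
lemma then gains a factor `R⁻²`. -/
lemma norm_le_of_re_le_of_hasDerivAt_zero {L : ℂ → ℂ} {R A : ℝ} (hR : 2 < R) (hA : 0 < A)
    (hL : DifferentiableOn ℂ L (ball 0 R)) (hL₀ : L 0 = 0) (hL' : HasDerivAt L 0 0)
    (hre : ∀ z ∈ ball (0 : ℂ) R, (L z).re ≤ A) {z : ℂ} (hz : ‖z‖ ≤ 1) :
    ‖L z‖ ≤ 8 * A / R ^ 2 := by
  have hR₀ : 0 < R := two_pos.trans hR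
  have hmaps : Set.MapsTo L (ball 0 (R / 2)) (closedBall (L 0) (2 * A)) := by
    intro w hw
    have hwR : ‖w‖ < R / 2 := mem_ball_zero_iff.1 hw
    rw [hL₀, mem_closedBall_zero_iff]
    refine (Complex.borelCaratheodory_zero hA hL hre hR₀
      (mem_ball_zero_iff.2 (by linarith)) hL₀).trans ?_
    rw [div_le_iff₀ (by linarith)]
    nlinarith
  have hlittleO : (L · - L 0) =o[nhds 0] fun w => ‖w - 0‖ ^ 1 := by
    simpa using! hL'.isLittleO.norm_right
  have hschwarz := Complex.dist_le_mul_div_pow_of_mapsTo_ball_of_isLittleO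
    (hL.mono (ball_subset_ball (by linarith))) hmaps hlittleO
    (mem_ball_zero_iff.2 (by linarith) : z ∈ ball 0 (R / 2))
  rw [hL₀, dist_zero_right, dist_zero_right] at hschwarz
  calc ‖L z‖ ≤ 2 * A * (‖z‖ / (R / 2)) ^ (1 + 1) := hschwarz
    _ ≤ 2 * A * (1 / (R / 2)) ^ (1 + 1) := by gcongr
    _ = 8 * A / R ^ 2 := by rw [div_div_eq_mul_div, div_pow]; ring

lemma iteratedDeriv_zero_of_even {g : ℂ → ℂ} (hg : Function.Even g) {k : ℕ} (hk : Odd k) :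
    iteratedDeriv k g 0 = 0 := by
  have h := iteratedDeriv_comp_neg k g 0
  rw [show (fun z => g (-z)) = g from funext hg, neg_zero, hk.neg_one_pow, neg_one_smul] at h
  linear_combination (1 / 2) * h

lemma exists_eq_mul_exp_of_even_of_norm_le {q : ℂ → ℂ} {R A : ℝ} (hR : 2 < R) (hA : 0 < A)
    (hq : DifferentiableOn ℂ q (ball 0 R)) (hqe : Function.Even q)
    (hne : ∀ z ∈ ball (0 : ℂ) R, q z ≠ 0)
    (hbound : ∀ z ∈ ball (0 : ℂ) R, ‖q z‖ ≤ ‖q 0‖ * Real.exp A) {z : ℂ} (hz : ‖z‖ ≤ 1) :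
    ∃ w : ℂ, ‖w‖ ≤ 8 * A / R ^ 2 ∧ q z = q 0 * Complex.exp w := by
  have hR₀ : 0 < R := two_pos.trans hR
  have h0 : (0 : ℂ) ∈ ball 0 R := mem_ball_self hR₀
  obtain ⟨L, hL₀, hL, hexp⟩ := exists_eq_mul_exp_of_forall_ne_zero hR₀ hq hne
  have hre : ∀ w ∈ ball (0 : ℂ) R, (L w).re ≤ A := by
    intro w hw
    have h := hbound w hw
    rw [hexp w hw, norm_mul, Complex.norm_exp] at h
    exact Real.exp_le_exp.1 (le_of_mul_le_mul_left h (norm_pos_iff.2 (hne 0 h0)))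
  have hL' : HasDerivAt L 0 0 := by
    have hq' : deriv q 0 = 0 := by
      rw [← iteratedDeriv_one]
      exact iteratedDeriv_zero_of_even hqe odd_one
    simpa [hq'] using hL 0 h0
  refine ⟨L z, norm_le_of_re_le_of_hasDerivAt_zero hR hA
    (fun w hw => (hL w hw).differentiableAt.differentiableWithinAt) hL₀ hL' hre hz,
    hexp z (mem_ball_zero_iff.2 (by linarith))⟩

end ZeroFreeEven

section PositiveZeros

open Topology

variable {f : ℂ → ℂ}

lemma finite_nonneg_zeros_le (hf : Differentiable ℂ f) (hf₀ : f 0 ≠ 0) (R : ℝ) :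
    {x : ℝ | 0 ≤ x ∧ x ≤ R ∧ f x = 0}.Finite := by
  by_contra hinf
  obtain ⟨x, -, hx⟩ := Set.Infinite.exists_accPt_of_subset_isCompact hinf
    (isCompact_Icc (a := 0) (b := R)) fun y hy => ⟨hy.1, hy.2.1⟩
  have hofReal : Tendsto ((↑) : ℝ → ℂ) (𝓝[≠] x) (𝓝[≠] (x : ℂ)) :=
    Complex.continuous_ofReal.continuousWithinAt.tendsto_nhdsWithin
      fun y hy => Complex.ofReal_injective.ne hy
  have hfreq : ∃ᶠ z in 𝓝[≠] (x : ℂ), f z = (fun _ => 0) z :=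
    hofReal.frequently ((accPt_iff_frequently_nhdsNE.1 hx).mono fun y hy => hy.2.2)
  exact hf₀ (congrFun (AnalyticOnNhd.eq_of_frequently_eq (fun z _ => hf.analyticAt z)
    (fun z _ => analyticAt_const) hfreq) 0)

lemma analyticOrderAt_ne_top_of_apply_zero_ne_zero (hf : Differentiable ℂ f) (hf₀ : f 0 ≠ 0)
    (z : ℂ) : analyticOrderAt f z ≠ ⊤ := by
  intro htop
  exact hf₀ (congrFun (AnalyticOnNhd.eq_of_eventuallyEq (fun z _ => hf.analyticAt z)
    (fun z _ => analyticAt_const) (analyticOrderAt_eq_top.1 htop)) 0)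

lemma analyticOrderAt_eq_zeroMult {z : ℂ} (hf : AnalyticAt ℂ f z)
    (hord : analyticOrderAt f z ≠ ⊤) : analyticOrderAt f z = zeroMult f z := by
  obtain ⟨n, hn⟩ := ENat.ne_top_iff_exists.1 hord
  obtain ⟨hlt, hne⟩ := (analyticOrderAt_eq_nat_iff_iteratedDeriv_eq_zero hf).1 hn.symm
  have : IsLeast {n : ℕ | iteratedDeriv n f z ≠ 0} n :=
    ⟨hne, fun k hk => not_lt.1 fun h => hk (hlt k h)⟩
  rw [← hn, zeroMult, this.csInf_eq]

/-- The multiset of zeros of `f` in `[0, R]`; junk if there are infinitely many of them. -/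
noncomputable def zerosUpTo (f : ℂ → ℂ) (R : ℝ) : Multiset ℝ :=
  ∑ᶠ x ∈ {x : ℝ | 0 ≤ x ∧ x ≤ R ∧ f x = 0}, Multiset.replicate (zeroMult f x) x

lemma mem_zerosUpTo {R x : ℝ} (hf : Differentiable ℂ f) (hf₀ : f 0 ≠ 0)
    (hx : x ∈ zerosUpTo f R) : 0 < x ∧ x ≤ R ∧ f x = 0 := by
  rw [zerosUpTo, finsum_mem_eq_finite_toFinset_sum _ (finite_nonneg_zeros_le hf hf₀ R),
    Multiset.mem_sum] at hx
  obtain ⟨y, hy, hxy⟩ := hx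
  obtain rfl := Multiset.eq_of_mem_replicate hxy
  obtain ⟨hx₀, hxR, hfx⟩ := (finite_nonneg_zeros_le hf hf₀ R).mem_toFinset.1 hy
  refine ⟨hx₀.lt_of_ne ?_, hxR, hfx⟩
  rintro rfl
  exact hf₀ hfx

lemma count_zerosUpTo {R x : ℝ} (hf : Differentiable ℂ f) (hf₀ : f 0 ≠ 0) (hx : 0 ≤ x)
    (hxR : x ≤ R) (hfx : f x = 0) : (zerosUpTo f R).count x = zeroMult f x := by
  have hfin := finite_nonneg_zeros_le hf hf₀ R
  rw [zerosUpTo, finsum_mem_eq_finite_toFinset_sum _ hfin, Multiset.count_sum',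
    Finset.sum_eq_single_of_mem x (hfin.mem_toFinset.2 ⟨hx, hxR, hfx⟩)]
  · exact Multiset.count_replicate_self x _
  · exact fun y _ hyx => by rw [Multiset.count_replicate, if_neg hyx]

lemma analyticOrderAt_eq_count_zerosUpTo {R x : ℝ} (hf : Differentiable ℂ f) (hf₀ : f 0 ≠ 0)
    (hx : 0 ≤ x) (hxR : x ≤ R) (hfx : f x = 0) :
    analyticOrderAt f x = (zerosUpTo f R).count x := by
  rw [count_zerosUpTo hf hf₀ hx hxR hfx, analyticOrderAt_eq_zeroMult (hf.analyticAt _)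
    (analyticOrderAt_ne_top_of_apply_zero_ne_zero hf hf₀ _)]

lemma mem_zerosUpTo_of_apply_eq_zero {R x : ℝ} (hf : Differentiable ℂ f) (hf₀ : f 0 ≠ 0)
    (hx : 0 ≤ x) (hxR : x ≤ R) (hfx : f x = 0) : x ∈ zerosUpTo f R := by
  rw [← Multiset.count_ne_zero, ← Nat.cast_ne_zero (R := ℕ∞),
    ← analyticOrderAt_eq_count_zerosUpTo hf hf₀ hx hxR hfx, Ne,
    (hf.analyticAt _).analyticOrderAt_eq_zero, not_not]
  exact hfx

lemma zerosUpTo_mono (hf : Differentiable ℂ f) (hf₀ : f 0 ≠ 0) :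
    Monotone (zerosUpTo f) := by
  intro r R hrR
  refine Multiset.le_iff_count.2 fun x => ?_
  by_cases hx : x ∈ zerosUpTo f r
  · obtain ⟨hx₀, hxr, hfx⟩ := mem_zerosUpTo hf hf₀ hx
    rw [count_zerosUpTo hf hf₀ hx₀.le hxr hfx, count_zerosUpTo hf hf₀ hx₀.le (hxr.trans hrR) hfx]
  · simp [Multiset.count_eq_zero_of_notMem hx]

lemma card_zerosUpTo (hf : Differentiable ℂ f) (hf₀ : f 0 ≠ 0) (R : ℝ) :
    ((zerosUpTo f R).card : ℝ) = nPlus f R := by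
  have hfin := finite_nonneg_zeros_le hf hf₀ R
  rw [zerosUpTo, finsum_mem_eq_finite_toFinset_sum _ hfin, Multiset.card_sum, Nat.cast_sum]
  simp only [Multiset.card_replicate]
  rw [← Finset.tsum_subtype' hfin.toFinset fun x : ℝ => (zeroMult f x : ℝ), hfin.coe_toFinset]
  rfl

lemma monotone_nPlus (hf : Differentiable ℂ f) (hf₀ : f 0 ≠ 0) : Monotone (nPlus f) := by
  intro r R hrR
  rw [← card_zerosUpTo hf hf₀, ← card_zerosUpTo hf hf₀, Nat.cast_le]
  exact Multiset.card_le_card (zerosUpTo_mono hf hf₀ hrR)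

lemma mem_zerosUpTo_sub {r R x : ℝ} (hf : Differentiable ℂ f) (hf₀ : f 0 ≠ 0)
    (hx : x ∈ zerosUpTo f R - zerosUpTo f r) : r < x ∧ x ≤ R := by
  obtain ⟨hx₀, hxR, hfx⟩ := mem_zerosUpTo hf hf₀ (Multiset.mem_of_le tsub_le_self hx)
  refine ⟨lt_of_not_ge fun hxr => (Multiset.mem_sub.1 hx).ne ?_, hxR⟩
  rw [count_zerosUpTo hf hf₀ hx₀.le hxr hfx, count_zerosUpTo hf hf₀ hx₀.le hxR hfx]

lemma one_sixteenth_le_div_one_add_sq {y : ℝ} (h₁ : 1 / 4 ≤ y) (h₂ : y ≤ 1) :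
    1 / 16 ≤ y / (1 + y) ^ 2 := by
  rw [div_le_div_iff₀ (by norm_num) (by positivity)]
  nlinarith

lemma nPlus_sub_le_bernoulliSumVar {R r : ℝ} (hf : Differentiable ℂ f) (hf₀ : f 0 ≠ 0)
    (hr : 0 < r) (hrR : 2 * r ≤ R) :
    (nPlus f (2 * r) - nPlus f r) / 16 ≤
      bernoulliSumVar ((zerosUpTo f R).map fun x => r ^ 2 * (x ^ 2)⁻¹) := by
  set v : ℝ → ℝ := fun x => r ^ 2 * (x ^ 2)⁻¹ / (1 + r ^ 2 * (x ^ 2)⁻¹) ^ 2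
  set d := zerosUpTo f (2 * r) - zerosUpTo f r
  have hcard : (d.card : ℝ) = nPlus f (2 * r) - nPlus f r := by
    have hle := zerosUpTo_mono hf hf₀ (by linarith : r ≤ 2 * r)
    rw [Multiset.card_sub hle, Nat.cast_sub (Multiset.card_le_card hle), card_zerosUpTo hf hf₀,
      card_zerosUpTo hf hf₀]
  obtain ⟨u, hu⟩ := Multiset.le_iff_exists_add.1
    (tsub_le_self.trans (zerosUpTo_mono hf hf₀ hrR) : d ≤ zerosUpTo f R)
  have hsum_u : 0 ≤ (u.map v).sum := Multiset.sum_nonneg <| by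
    simp only [Multiset.mem_map, forall_exists_index, and_imp, forall_apply_eq_imp_iff₂]
    exact fun x _ => by positivity
  have hsum_d : d.card • (1 / 16 : ℝ) ≤ (d.map v).sum := by
    rw [← Multiset.card_map v d]
    refine Multiset.card_nsmul_le_sum fun y hy => ?_
    obtain ⟨x, hx, rfl⟩ := Multiset.mem_map.1 hy
    obtain ⟨hrx, hx2r⟩ := mem_zerosUpTo_sub hf hf₀ hx
    have hx₀ : 0 < x := hr.trans hrx
    refine one_sixteenth_le_div_one_add_sq ?_ ?_
    · rw [← div_eq_mul_inv, div_le_div_iff₀ (by norm_num) (by positivity)]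
      nlinarith
    · rw [← div_eq_mul_inv, div_le_one (by positivity)]
      gcongr
  calc (nPlus f (2 * r) - nPlus f r) / 16 = d.card • (1 / 16 : ℝ) := by
        rw [← hcard, nsmul_eq_mul, mul_one_div]
    _ ≤ (d.map v).sum + (u.map v).sum := hsum_d.trans (le_add_of_nonneg_right hsum_u)
    _ = _ := by
        rw [← Multiset.sum_add, ← Multiset.map_add, ← hu, bernoulliSumVar, Multiset.map_map]
        rfl

end PositiveZeros

/-- Even entire functions of order at most `2` and minimal type with only real zeros, none of them
at the origin. -/
structure EvenMinimalType (f : ℂ → ℂ) : Prop where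
  entire : Differentiable ℂ f
  minimalType : ∀ ε > 0, ∃ C, ∀ z, ‖f z‖ ≤ C * Real.exp (ε * ‖z‖ ^ 2)
  even : Function.Even f
  ne_zero : f 0 ≠ 0
  realZeros : ∀ z, f z = 0 → z.im = 0

section PartialProducts

open Metric Topology

variable {f : ℂ → ℂ}

lemma one_le_norm_zeroProd {s : Multiset ℝ} {z : ℂ}
    (hs : ∀ x ∈ s, 0 < x ∧ 2 * x ≤ ‖z‖) : 1 ≤ ‖zeroProd s z‖ := by
  induction s using Multiset.induction with
  | empty => simp [zeroProd]
  | cons x s ih =>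
    obtain ⟨⟨hx, hxz⟩, hs⟩ := Multiset.forall_mem_cons.1 hs
    rw [zeroProd_cons, Pi.mul_apply, norm_mul]
    refine one_le_mul_of_one_le_of_one_le ?_ (ih hs)
    have hsq : 2 ≤ ‖z ^ 2 / (x : ℂ) ^ 2‖ := by
      rw [norm_div, norm_pow, norm_pow, Complex.norm_of_nonneg hx.le, le_div_iff₀ (by positivity)]
      nlinarith
    calc (1 : ℝ) ≤ ‖z ^ 2 / (x : ℂ) ^ 2‖ - ‖(1 : ℂ)‖ := by rw [norm_one]; linarith
      _ ≤ ‖1 - z ^ 2 / (x : ℂ) ^ 2‖ := by rw [norm_sub_rev]; exact norm_sub_norm_le _ _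

lemma norm_le_of_norm_zeroProd_mul_le {q : ℂ → ℂ} (hq : Differentiable ℂ q) {s : Multiset ℝ}
    {R M : ℝ} (hs : ∀ x ∈ s, 0 < x ∧ x ≤ R) (hM : ∀ z ∈ sphere (0 : ℂ) (2 * R),
      ‖(zeroProd s * q) z‖ ≤ M) {z : ℂ} (hz : z ∈ ball 0 R) : ‖q z‖ ≤ M := by
  have hR : 0 < R := pos_of_mem_ball hz
  refine Complex.norm_le_of_forall_mem_frontier_norm_le isBounded_ball hq.diffContOnCl
    (fun w hw => ?_) (subset_closure (ball_subset_ball (by linarith : R ≤ 2 * R) hz))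
  rw [frontier_ball _ (by linarith)] at hw
  have hone : 1 ≤ ‖zeroProd s w‖ := one_le_norm_zeroProd fun x hx =>
    ⟨(hs x hx).1, by rw [mem_sphere_zero_iff_norm.1 hw]; linarith [(hs x hx).2]⟩
  calc ‖q w‖ ≤ ‖zeroProd s w‖ * ‖q w‖ := le_mul_of_one_le_left (norm_nonneg _) hone
    _ = ‖(zeroProd s * q) w‖ := (norm_mul _ _).symm
    _ ≤ M := hM w hw

lemma EvenMinimalType.exists_eq_zeroProd_mul (hf : EvenMinimalType f) (R : ℝ) :
    ∃ q : ℂ → ℂ, Differentiable ℂ q ∧ Function.Even q ∧ f = zeroProd (zerosUpTo f R) * q ∧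
      ∀ z ∈ ball (0 : ℂ) R, q z ≠ 0 := by
  obtain ⟨q, hq, hqe, hfq, hne⟩ := exists_eq_zeroProd_mul_of_count_eq hf.entire hf.even
    (s := zerosUpTo f R) (fun x hx => (mem_zerosUpTo hf.entire hf.ne_zero hx).1) fun x hx =>
      have ⟨hx₀, hxR, hfx⟩ := mem_zerosUpTo hf.entire hf.ne_zero hx
      analyticOrderAt_eq_count_zerosUpTo hf.entire hf.ne_zero hx₀.le hxR hfx
  have hne_nonneg {x : ℝ} (hx : 0 ≤ x) (hxR : x ≤ R) : q x ≠ 0 := fun hqx =>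
    hne x (mem_zerosUpTo_of_apply_eq_zero hf.entire hf.ne_zero hx hxR
      (by rw [hfq, Pi.mul_apply, hqx, mul_zero])) hqx
  refine ⟨q, hq, hqe, hfq, fun z hz hqz => ?_⟩
  obtain ⟨x, rfl⟩ : ∃ x : ℝ, z = x := ⟨z.re, Complex.ext rfl (hf.realZeros z (by
    rw [hfq, Pi.mul_apply, hqz, mul_zero]))⟩
  have hxR : |x| ≤ R := by simpa using (mem_ball_zero_iff.1 hz).le
  refine hne_nonneg (abs_nonneg x) hxR ?_
  rcases abs_choice x with h | h <;> rw [h]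
  · exact hqz
  · rw [Complex.ofReal_neg, hqe, hqz]

lemma EvenMinimalType.exists_eq_zeroProd_mul_exp (hf : EvenMinimalType f) {C ε R : ℝ} (hε : 0 < ε)
    (hC : ∀ z, ‖f z‖ ≤ C * Real.exp (ε * ‖z‖ ^ 2)) (hR : 2 < R) {z : ℂ} (hz : ‖z‖ ≤ 1) :
    ∃ w : ℂ, ‖w‖ ≤ 8 * (Real.log (C / ‖f 0‖) + ε * (2 * R) ^ 2) / R ^ 2 ∧
      f z = f 0 * zeroProd (zerosUpTo f R) z * Complex.exp w := by
  obtain ⟨q, hq, hqe, hfq, hne⟩ := hf.exists_eq_zeroProd_mul R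
  have hq₀ : q 0 = f 0 := by rw [hfq, Pi.mul_apply, zeroProd_apply_zero, one_mul]
  have hf₀ : 0 < ‖f 0‖ := norm_pos_iff.2 hf.ne_zero
  have hCf : 1 ≤ C / ‖f 0‖ := (one_le_div hf₀).2 (by simpa using hC 0)
  have hbound : ∀ w ∈ ball (0 : ℂ) R,
      ‖q w‖ ≤ ‖q 0‖ * Real.exp (Real.log (C / ‖f 0‖) + ε * (2 * R) ^ 2) := by
    intro w hw
    rw [Real.exp_add, Real.exp_log (one_pos.trans_le hCf), hq₀, ← mul_assoc,
      mul_div_cancel₀ _ hf₀.ne']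
    refine norm_le_of_norm_zeroProd_mul_le hq (s := zerosUpTo f R) (fun x hx =>
      have h := mem_zerosUpTo hf.entire hf.ne_zero hx
      ⟨h.1, h.2.1⟩) (fun v hv => ?_) hw
    rw [← hfq, ← mem_sphere_zero_iff_norm.1 hv]
    exact hC v
  obtain ⟨w, hw, hqw⟩ := exists_eq_mul_exp_of_even_of_norm_le hR
    (add_pos_of_nonneg_of_pos (Real.log_nonneg hCf) (by positivity)) hq.differentiableOn hqe hne
    hbound hz
  refine ⟨w, hw, ?_⟩
  rw [mul_right_comm, ← hq₀, ← hqw, mul_comm]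
  exact congrFun hfq z

lemma EvenMinimalType.eventually_exists_eq_zeroProd_mul_exp (hf : EvenMinimalType f) {ε : ℝ}
    (hε : 0 < ε) : ∀ᶠ R in atTop, ∀ z : ℂ, ‖z‖ ≤ 1 → ∃ w : ℂ, ‖w‖ ≤ ε ∧
      f z = f 0 * zeroProd (zerosUpTo f R) z * Complex.exp w := by
  obtain ⟨C, hC⟩ := hf.minimalType (ε / 64) (by positivity)
  have hlim : Tendsto (fun R : ℝ => 8 * Real.log (C / ‖f 0‖) / R ^ 2) atTop (𝓝 0) :=
    (tendsto_pow_atTop two_ne_zero).const_div_atTop _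
  filter_upwards [eventually_gt_atTop 2, hlim.eventually_le_const (half_pos hε)] with R hR hlog z hz
  obtain ⟨w, hw, hfw⟩ := hf.exists_eq_zeroProd_mul_exp (by positivity) hC hR hz
  refine ⟨w, hw.trans ?_, hfw⟩
  have : R ≠ 0 := by positivity
  calc 8 * (Real.log (C / ‖f 0‖) + ε / 64 * (2 * R) ^ 2) / R ^ 2
      = 8 * Real.log (C / ‖f 0‖) / R ^ 2 + ε / 2 := by
        field_simp
        ring
    _ ≤ ε := by linarith

lemma EvenMinimalType.tendstoUniformlyOn_zeroProd (hf : EvenMinimalType f) :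
    TendstoUniformlyOn (fun R => (f 0 • zeroProd (zerosUpTo f R) : ℂ → ℂ)) f atTop
      (closedBall 0 1) := by
  rw [Metric.tendstoUniformlyOn_iff]
  intro ε hε
  obtain ⟨C, hC⟩ := (isCompact_closedBall (0 : ℂ) 1).exists_bound_of_continuousOn
    hf.entire.continuous.continuousOn
  have hC₀ : 0 ≤ C := (norm_nonneg _).trans (hC 0 (mem_closedBall_self zero_le_one))
  have hδ : 0 < min 1 (ε / (2 * C + 1)) := by positivity
  filter_upwards [hf.eventually_exists_eq_zeroProd_mul_exp hδ] with R hR z hz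
  obtain ⟨w, hw, hfw⟩ := hR z (mem_closedBall_zero_iff.1 hz)
  have hsub : f z - f 0 * zeroProd (zerosUpTo f R) z = -(f z * (Complex.exp (-w) - 1)) := by
    have hexp_mul : Complex.exp w * Complex.exp (-w) = 1 := by
      rw [← Complex.exp_add, add_neg_cancel, Complex.exp_zero]
    rw [hfw]
    linear_combination (f 0 * zeroProd (zerosUpTo f R) z) * hexp_mul
  have hexp : ‖Complex.exp (-w) - 1‖ ≤ 2 * (ε / (2 * C + 1)) := by
    refine (Complex.norm_exp_sub_one_le ?_).trans ?_ <;> rw [norm_neg]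
    · exact hw.trans (min_le_left _ _)
    · exact mul_le_mul_of_nonneg_left (hw.trans (min_le_right _ _)) two_pos.le
  calc dist (f z) ((f 0 • zeroProd (zerosUpTo f R)) z)
      = ‖f z‖ * ‖Complex.exp (-w) - 1‖ := by
        rw [dist_eq_norm, Pi.smul_apply, smul_eq_mul, hsub, norm_neg, norm_mul]
    _ ≤ C * (2 * (ε / (2 * C + 1))) := by gcongr; exact hC z hz
    _ = 2 * C / (2 * C + 1) * ε := by ring
    _ < ε := mul_lt_of_lt_one_left hε ((div_lt_one (by positivity)).2 (lt_add_one _))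

end PartialProducts

section Coefficients

open Metric Topology

lemma iteratedDeriv_eval (p : Polynomial ℂ) (k : ℕ) :
    iteratedDeriv k (fun z => p.eval z) = fun z => ((Polynomial.derivative)^[k] p).eval z := by
  induction k with
  | zero => simp
  | succ k ih =>
    rw [iteratedDeriv_succ, ih, Function.iterate_succ_apply']
    ext z
    exact Polynomial.deriv _

lemma iteratedDeriv_eval_zero (p : Polynomial ℂ) (k : ℕ) :
    iteratedDeriv k (fun z => p.eval z) 0 = k.factorial * p.coeff k := by
  rw [congrFun (iteratedDeriv_eval p k) 0, ← Polynomial.coeff_zero_eq_eval_zero,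
    Polynomial.coeff_iterate_derivative, zero_add, Nat.descFactorial_self, nsmul_eq_mul]

lemma iteratedDeriv_zeroProd_zero (s : Multiset ℝ) (n : ℕ) :
    iteratedDeriv (2 * n) (zeroProd s) 0 =
      (2 * n).factorial * ((-1) ^ n * (genPoly (s.map fun x => (x ^ 2)⁻¹)).coeff n) := by
  set p := (genPoly (s.map fun x => (x ^ 2)⁻¹)).map (algebraMap ℝ ℂ) with hp
  have heval : zeroProd s = fun z =>
      (Polynomial.expand ℂ 2 (p.comp (Polynomial.C (-1) * Polynomial.X))).eval z := by
    ext z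
    rw [zeroProd_eq_aeval_genPoly, Polynomial.aeval_def, ← Polynomial.eval_map, ← hp,
      Polynomial.expand_eval]
    simp
  rw [heval, iteratedDeriv_eval_zero, mul_comm 2 n, Polynomial.coeff_expand_mul two_pos,
    Polynomial.comp_C_mul_X_coeff, hp, Polynomial.coeff_map, mul_comm (_ ^ n)]
  rfl

lemma tendstoLocallyUniformlyOn_iteratedDeriv {ι : Type*} {l : Filter ι} {F : ι → ℂ → ℂ}
    {g : ℂ → ℂ} {U : Set ℂ} (hU : IsOpen U) (hFg : TendstoLocallyUniformlyOn F g l U)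
    (hF : ∀ᶠ i in l, DifferentiableOn ℂ (F i) U) (n : ℕ) :
    TendstoLocallyUniformlyOn (fun i => iteratedDeriv n (F i)) (iteratedDeriv n g) l U := by
  induction n generalizing F g with
  | zero => simpa using! hFg
  | succ n ih =>
    simp only [iteratedDeriv_succ']
    exact ih (hFg.deriv hF hU) (hF.mono fun i hi => hi.deriv hU)

lemma hasSum_gam_of_even {f : ℂ → ℂ} (hf : Differentiable ℂ f) (hev : Function.Even f) (z : ℂ) :
    HasSum (fun k : ℕ => gam f (2 * k) * z ^ (2 * k) / (2 * k).factorial) (f z) := by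
  have htaylor := Complex.hasSum_taylorSeries_of_entire hf 0 z
  have hodd : ∀ k ∉ Set.range (2 * · : ℕ → ℕ),
      (k.factorial : ℂ)⁻¹ • (z - 0) ^ k • iteratedDeriv k f 0 = 0 := by
    intro k hk
    rw [iteratedDeriv_zero_of_even hev, smul_zero, smul_zero]
    rw [← Nat.not_even_iff_odd, even_iff_exists_two_mul]
    exact fun ⟨m, hm⟩ => hk ⟨m, hm.symm⟩
  refine (((mul_right_injective₀ two_ne_zero).hasSum_iff hodd).2 htaylor).congr_fun fun k => ?_
  simp only [Function.comp_apply, sub_zero, smul_eq_mul, gam]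
  ring

end Coefficients

section EvenCoefficients

open Topology

variable {f : ℂ → ℂ}

/-- The multiset of inverse squares of the zeros of `f` in `[0, R]`. -/
noncomputable def invSqZeros (f : ℂ → ℂ) (R : ℝ) : Multiset ℝ :=
  (zerosUpTo f R).map fun x => (x ^ 2)⁻¹

/-- The normalised Taylor coefficients `c_n` in `f z = f 0 * ∑ (-1) ^ n * c_n * z ^ (2 * n)`, for
even `f` with `f / f 0` real on the real line. The real part only serves to make them real numbers;
see `EvenMinimalType.ofReal_evenCoeff`. -/
noncomputable def evenCoeff (f : ℂ → ℂ) (n : ℕ) : ℝ :=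
  ((-1) ^ n * gam f (2 * n) / ((2 * n).factorial * f 0)).re

lemma invSqZeros_pos (hf : Differentiable ℂ f) (hf₀ : f 0 ≠ 0) (R : ℝ) :
    ∀ y ∈ invSqZeros f R, 0 < y := by
  intro y hy
  obtain ⟨x, hx, rfl⟩ := Multiset.mem_map.1 hy
  have := (mem_zerosUpTo hf hf₀ hx).1
  positivity

lemma EvenMinimalType.tendsto_ofReal_coeff (hf : EvenMinimalType f) (n : ℕ) :
    Tendsto (fun R => ((genPoly (invSqZeros f R)).coeff n : ℂ)) atTop
      (𝓝 ((-1) ^ n * gam f (2 * n) / ((2 * n).factorial * f 0))) := by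
  have hdiff (R : ℝ) : Differentiable ℂ (f 0 • zeroProd (zerosUpTo f R)) :=
    (differentiable_zeroProd _).const_smul _
  have hunif := tendstoLocallyUniformlyOn_iteratedDeriv Metric.isOpen_ball
    (hf.tendstoUniformlyOn_zeroProd.mono Metric.ball_subset_closedBall).tendstoLocallyUniformlyOn
    (.of_forall fun R => (hdiff R).differentiableOn) (2 * n)
  have hgam := (hunif.tendsto_at (Metric.mem_ball_self one_pos)).const_mul ((-1 : ℂ) ^ n)
    |>.div_const ((2 * n).factorial * f 0)
  refine hgam.congr fun R => ?_
  have hfac : ((2 * n).factorial : ℂ) ≠ 0 := Nat.cast_ne_zero.2 (Nat.factorial_ne_zero _)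
  have hsign : ((-1 : ℂ) ^ n) * (-1) ^ n = 1 := by rw [← mul_pow, neg_one_mul, neg_neg, one_pow]
  have hf₀ := hf.ne_zero
  rw [iteratedDeriv_const_smul_field, iteratedDeriv_zeroProd_zero, smul_eq_mul,
    div_eq_iff (mul_ne_zero hfac hf₀), invSqZeros]
  linear_combination (f 0 * (2 * n).factorial *
    (genPoly ((zerosUpTo f R).map fun x => (x ^ 2)⁻¹)).coeff n) * hsign

lemma EvenMinimalType.tendsto_coeff (hf : EvenMinimalType f) (n : ℕ) :
    Tendsto (fun R => (genPoly (invSqZeros f R)).coeff n) atTop (𝓝 (evenCoeff f n)) :=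
  (Complex.continuous_re.tendsto _).comp (hf.tendsto_ofReal_coeff n)

lemma EvenMinimalType.ofReal_evenCoeff (hf : EvenMinimalType f) (n : ℕ) :
    (evenCoeff f n : ℂ) = (-1) ^ n * gam f (2 * n) / ((2 * n).factorial * f 0) :=
  tendsto_nhds_unique ((Complex.continuous_ofReal.tendsto _).comp (hf.tendsto_coeff n))
    (hf.tendsto_ofReal_coeff n)

lemma EvenMinimalType.gam_two_mul (hf : EvenMinimalType f) (n : ℕ) :
    gam f (2 * n) = f 0 * (2 * n).factorial * ((-1) ^ n * evenCoeff f n) := by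
  have hfac : ((2 * n).factorial : ℂ) ≠ 0 := Nat.cast_ne_zero.2 (Nat.factorial_ne_zero _)
  have hsign : ((-1 : ℂ) ^ n) * (-1) ^ n = 1 := by rw [← mul_pow, neg_one_mul, neg_neg, one_pow]
  have hf₀ := hf.ne_zero
  rw [hf.ofReal_evenCoeff]
  field_simp
  linear_combination (-gam f (2 * n)) * hsign

lemma EvenMinimalType.evenCoeff_pos (hf : EvenMinimalType f) (hn : Tendsto (nPlus f) atTop atTop)
    (n : ℕ) : 0 < evenCoeff f n := by
  have hpos := invSqZeros_pos hf.entire hf.ne_zero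
  obtain ⟨r, hr⟩ := (hn.eventually_ge_atTop (n : ℝ)).exists
  rw [← card_zerosUpTo hf.entire hf.ne_zero, Nat.cast_le,
    ← Multiset.card_map fun x : ℝ => (x ^ 2)⁻¹] at hr
  refine (genPoly_coeff_pos (hpos r) hr).trans_le (ge_of_tendsto (hf.tendsto_coeff n) ?_)
  filter_upwards [eventually_ge_atTop r] with R hR
  exact genPoly_coeff_le_of_le (Multiset.map_le_map (zerosUpTo_mono hf.entire hf.ne_zero hR))
    (fun y hy => (hpos R y hy).le) n

lemma EvenMinimalType.evenCoeff_logConcave (hf : EvenMinimalType f) {i j : ℕ} (hij : i ≤ j) :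
    evenCoeff f i * evenCoeff f (j + 1) ≤ evenCoeff f (i + 1) * evenCoeff f j :=
  le_of_tendsto_of_tendsto' ((hf.tendsto_coeff i).mul (hf.tendsto_coeff (j + 1)))
    ((hf.tendsto_coeff (i + 1)).mul (hf.tendsto_coeff j)) fun R =>
      genPoly_coeff_logConcave
        (fun y hy => (invSqZeros_pos hf.entire hf.ne_zero R y hy).le) hij

lemma EvenMinimalType.tendsto_evenCoeff_mul_pow (hf : EvenMinimalType f) {T : ℝ} (hT : 0 ≤ T) :
    Tendsto (fun n => evenCoeff f n * T ^ n) atTop (𝓝 0) := by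
  have hterm := (hasSum_gam_of_even hf.entire hf.even (√T : ℂ)).summable.tendsto_atTop_zero
  have hsq : ((√T : ℝ) : ℂ) ^ 2 = T := by rw [← Complex.ofReal_pow, Real.sq_sqrt hT]
  have hterm' := hterm.norm.div_const ‖f 0‖
  rw [norm_zero, zero_div] at hterm'
  refine tendsto_zero_iff_norm_tendsto_zero.2 (hterm'.congr fun n => ?_)
  have hfac : ((2 * n).factorial : ℂ) ≠ 0 := Nat.cast_ne_zero.2 (Nat.factorial_ne_zero _)
  rw [hf.gam_two_mul, pow_mul, hsq, ← norm_div]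
  have hf₀ := hf.ne_zero
  have : f 0 * (2 * n).factorial * ((-1) ^ n * evenCoeff f n) * (T : ℂ) ^ n /
      (2 * n).factorial / f 0 = (-1) ^ n * ((evenCoeff f n * T ^ n : ℝ) : ℂ) := by
    push_cast
    field_simp
  rw [this, norm_mul, norm_pow, norm_neg, norm_one, one_pow, one_mul, Complex.norm_real]

lemma tendsto_div_succ_atTop {c : ℕ → ℝ} (hpos : ∀ n, 0 < c n)
    (hmono : Monotone fun n => c n / c (n + 1))
    (hc : ∀ T : ℝ, 0 ≤ T → Tendsto (fun n => c n * T ^ n) atTop (𝓝 0)) :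
    Tendsto (fun n => c n / c (n + 1)) atTop atTop := by
  refine tendsto_atTop_atTop_of_monotone hmono fun b => ?_
  by_contra! hlt
  set T := max b 0
  have hle (n : ℕ) : c 0 ≤ c n * T ^ n := by
    induction n with
    | zero => simp
    | succ n ih =>
      have hratio : c n ≤ T * c (n + 1) :=
        (div_le_iff₀ (hpos _)).1 ((hlt n).le.trans (le_max_left b 0))
      calc c 0 ≤ c n * T ^ n := ih
        _ ≤ T * c (n + 1) * T ^ n := by gcongr
        _ = c (n + 1) * T ^ (n + 1) := by ring
  exact (hpos 0).not_ge (ge_of_tendsto' (hc T (le_max_right b 0)) hle)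

lemma EvenMinimalType.tendsto_evenCoeff_div_succ (hf : EvenMinimalType f)
    (hn : Tendsto (nPlus f) atTop atTop) :
    Tendsto (fun n => evenCoeff f n / evenCoeff f (n + 1)) atTop atTop := by
  refine tendsto_div_succ_atTop (hf.evenCoeff_pos hn) (fun i j hij => ?_)
    fun T hT => hf.tendsto_evenCoeff_mul_pow hT
  refine (div_le_div_iff₀ (hf.evenCoeff_pos hn _) (hf.evenCoeff_pos hn _)).2 ?_
  linarith [hf.evenCoeff_logConcave hij]

lemma EvenMinimalType.evenCoeff_sq_sub_le (hf : EvenMinimalType f)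
    (hn : Tendsto (nPlus f) atTop atTop) {V r₀ : ℝ} (hV : 1 ≤ V)
    (hcount : ∀ r ≥ r₀, 16 * V ≤ nPlus f (2 * r) - nPlus f r) {n : ℕ}
    (hr₀ : r₀ < √(evenCoeff f (n + 1) / evenCoeff f (n + 2))) :
    evenCoeff f (n + 1) ^ 2 - evenCoeff f n * evenCoeff f (n + 2) ≤
      6 / √V * evenCoeff f (n + 1) ^ 2 := by
  set p : ℝ → Polynomial ℝ := fun R => genPoly (invSqZeros f R)
  have h₀ : Tendsto (fun R => (p R).coeff n) atTop _ := hf.tendsto_coeff n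
  have h₁ : Tendsto (fun R => (p R).coeff (n + 1)) atTop _ := hf.tendsto_coeff (n + 1)
  have h₂ : Tendsto (fun R => (p R).coeff (n + 2)) atTop _ := hf.tendsto_coeff (n + 2)
  have hr : Tendsto (fun R => √((p R).coeff (n + 1) / (p R).coeff (n + 2))) atTop _ :=
    (h₁.div h₂ (hf.evenCoeff_pos hn _).ne').sqrt
  refine le_of_tendsto_of_tendsto ((h₁.pow 2).sub (h₀.mul h₂)) ((h₁.pow 2).const_mul _) ?_
  filter_upwards [h₁.eventually_const_lt (hf.evenCoeff_pos hn _),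
    h₂.eventually_const_lt (hf.evenCoeff_pos hn _), hr.eventually_const_lt hr₀,
    (hr.const_mul 2).eventually_lt_const (lt_add_one _), eventually_ge_atTop _]
    with R hpos₁ hpos₂ hr₀R hlt hR
  have ht : 0 < (p R).coeff (n + 1) / (p R).coeff (n + 2) := div_pos hpos₁ hpos₂
  refine genPoly_coeff_sq_sub_le
    (fun y hy => (invSqZeros_pos hf.entire hf.ne_zero R y hy).le) hV hpos₁ ht
    (div_mul_cancel₀ _ hpos₂.ne') ?_
  have hvar := nPlus_sub_le_bernoulliSumVar hf.entire hf.ne_zero (Real.sqrt_pos.2 ht)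
    (hlt.le.trans hR)
  rw [Real.sq_sqrt ht.le] at hvar
  calc V ≤ _ := by linarith [hcount _ hr₀R.le]
    _ ≤ _ := hvar
    _ = _ := by rw [invSqZeros, Multiset.map_map]; rfl

lemma EvenMinimalType.tendsto_evenCoeff_mul_div_sq (hf : EvenMinimalType f)
    (hn : Tendsto (nPlus f) atTop atTop)
    (hcount : Tendsto (fun r => nPlus f (2 * r) - nPlus f r) atTop atTop) :
    Tendsto (fun n => evenCoeff f n * evenCoeff f (n + 2) / evenCoeff f (n + 1) ^ 2) atTop
      (𝓝 1) := by
  rw [Metric.tendsto_nhds]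
  intro ε hε
  have hV₀ : Tendsto (fun V => 6 / √V) atTop (𝓝 0) := Real.tendsto_sqrt_atTop.const_div_atTop 6
  obtain ⟨V, hV, hVε⟩ := ((eventually_ge_atTop 1).and (hV₀.eventually_lt_const hε)).exists
  obtain ⟨r₀, hr₀⟩ := eventually_atTop.1 (hcount.eventually_ge_atTop (16 * V))
  have hratio := Real.tendsto_sqrt_atTop.comp
    ((tendsto_add_atTop_iff_nat 1).2 (hf.tendsto_evenCoeff_div_succ hn))
  filter_upwards [hratio.eventually_gt_atTop r₀] with n hlt
  have hsub := hf.evenCoeff_sq_sub_le hn hV hr₀ hlt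
  have hlc : evenCoeff f n * evenCoeff f (n + 2) ≤ _ := hf.evenCoeff_logConcave n.le_succ
  have hsq : 0 < evenCoeff f (n + 1) ^ 2 := pow_pos (hf.evenCoeff_pos hn _) 2
  rw [Real.dist_eq, abs_sub_comm, abs_of_nonneg (sub_nonneg.2 ((div_le_one hsq).2
    (hlc.trans_eq (sq _).symm))), one_sub_div hsq.ne']
  exact ((div_le_iff₀ hsq).2 hsub).trans_lt hVε

end EvenCoefficients

section DominatedSeries

open Topology

lemma tendstoUniformlyOn_of_hasSum_mul {ι X : Type*} {l : Filter ι} [l.NeBot] {s : Set X}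
    {u : ι → ℕ → ℂ} {v : ℕ → ℂ} {φ : ℕ → X → ℂ} {M bound : ℕ → ℝ} {F : ι → X → ℂ} {G : X → ℂ}
    (hF : ∀ᶠ i in l, ∀ x ∈ s, HasSum (fun k => u i k * φ k x) (F i x))
    (hG : ∀ x ∈ s, HasSum (fun k => v k * φ k x) (G x))
    (hM : ∀ k, 0 ≤ M k) (hφ : ∀ k, ∀ x ∈ s, ‖φ k x‖ ≤ M k)
    (hu : ∀ k, Tendsto (fun i => u i k) l (𝓝 (v k))) (hbound : Summable bound)
    (hdom : ∀ᶠ i in l, ∀ k, ‖u i k‖ * M k ≤ bound k) : TendstoUniformlyOn F G l s := by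
  have hv (k : ℕ) : ‖v k‖ * M k ≤ bound k :=
    le_of_tendsto ((hu k).norm.mul_const _) (hdom.mono fun i hi => hi k)
  have herr_le {i : ι} (hi : ∀ k, ‖u i k‖ * M k ≤ bound k) (k : ℕ) :
      ‖‖u i k - v k‖ * M k‖ ≤ 2 * bound k := by
    rw [Real.norm_of_nonneg (mul_nonneg (norm_nonneg _) (hM k))]
    calc ‖u i k - v k‖ * M k ≤ (‖u i k‖ + ‖v k‖) * M k := by
          gcongr
          exacts [hM k, norm_sub_le _ _]
      _ ≤ 2 * bound k := by linarith [hi k, hv k]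
  have herr : Tendsto (fun i => ∑' k, ‖u i k - v k‖ * M k) l (𝓝 0) := by
    rw [← tsum_zero (β := ℕ)]
    refine tendsto_tsum_of_dominated_convergence (hbound.mul_left 2) (fun k => ?_)
      (hdom.mono fun i hi k => herr_le hi k)
    simpa using ((hu k).sub_const (v k)).norm.mul_const (M k)
  rw [Metric.tendstoUniformlyOn_iff]
  intro ε hε
  filter_upwards [hF, hdom, herr.eventually_lt_const hε] with i hFi hdomi hlt x hx
  have hsummable : Summable fun k => ‖u i k - v k‖ * M k :=
    (hbound.mul_left 2).of_norm_bounded (herr_le hdomi)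
  rw [dist_comm, dist_eq_norm, ← ((hFi x hx).sub (hG x hx)).tsum_eq]
  refine (tsum_of_norm_bounded hsummable.hasSum fun k => ?_).trans_lt hlt
  rw [← sub_mul, norm_mul]
  exact mul_le_mul_of_nonneg_left (hφ k x hx) (norm_nonneg _)

lemma summable_prod_range_of_tendsto_lt_one {ρ : ℕ → ℝ} {c : ℝ} (hc : c < 1) (hρ : ∀ j, 0 < ρ j)
    (hlim : Tendsto ρ atTop (𝓝 c)) : Summable fun k => ∏ j ∈ Finset.range k, ρ j := by
  have hprod (k : ℕ) : 0 < ∏ j ∈ Finset.range k, ρ j := Finset.prod_pos fun j _ => hρ j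
  refine summable_of_ratio_test_tendsto_lt_one hc (.of_forall fun k => (hprod k).ne')
    (hlim.congr fun k => ?_)
  rw [Finset.prod_range_succ, Real.norm_of_nonneg (mul_pos (hprod k) (hρ k)).le,
    Real.norm_of_nonneg (hprod k).le, mul_div_cancel_left₀ _ (hprod k).ne']

end DominatedSeries

section RescaledCosine

open Topology

variable {a b : ℕ → ℝ}

lemma pow_two_mul_div_factorial (x : ℝ) (k : ℕ) :
    x ^ (2 * k) / (2 * k).factorial =
      ∏ j ∈ Finset.range k, x ^ 2 / ((2 * j + 1) * (2 * j + 2)) := by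
  induction k with
  | zero => simp
  | succ k ih =>
    rw [Finset.prod_range_succ, ← ih, mul_add_one, Nat.factorial_succ, Nat.factorial_succ]
    push_cast
    field_simp
    ring

lemma tendsto_mul_add_of_tendsto_div_succ (hb : ∀ n, b n ≠ 0)
    (hratio : Tendsto (fun n => b (n + 1) / b n) atTop (𝓝 1))
    (ha : Tendsto (fun n => a n * b n) atTop (𝓝 1)) (j : ℕ) :
    Tendsto (fun n => a n * b (n + j)) atTop (𝓝 1) := by
  induction j with
  | zero => exact ha
  | succ j ih =>
    have hmul := ih.mul ((tendsto_add_atTop_iff_nat j).2 hratio)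
    rw [mul_one] at hmul
    refine hmul.congr fun n => ?_
    rw [mul_assoc, mul_div_cancel₀ _ (hb _), add_assoc]

lemma two_mul_add_div_le {N n : ℕ} (hn : N ≤ n) (j : ℕ) :
    (2 * ((n + j : ℕ) : ℝ) + 1) * (2 * ((n + j : ℕ) : ℝ) + 2) / ((2 * n + 1) * (2 * n + 2)) /
      ((2 * j + 1) * (2 * j + 2)) ≤ (1 / (2 * j + 1) + 1 / (2 * N + 1)) ^ 2 := by
  have hNn : 1 / (2 * (n : ℝ) + 1) ≤ 1 / (2 * N + 1) := by gcongr
  have hfirst : (2 * ((n + j : ℕ) : ℝ) + 1) / ((2 * n + 1) * (2 * j + 1)) ≤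
      1 / (2 * j + 1) + 1 / (2 * N + 1) := by
    refine le_trans ?_ (add_le_add_right hNn _)
    rw [div_add_div _ _ (by positivity) (by positivity), mul_comm (2 * (n : ℝ) + 1)]
    refine div_le_div_of_nonneg_right ?_ (by positivity)
    push_cast
    linarith
  have hsecond : (2 * ((n + j : ℕ) : ℝ) + 2) / ((2 * n + 2) * (2 * j + 2)) ≤
      1 / (2 * j + 1) + 1 / (2 * N + 1) := by
    calc _ ≤ 1 / (2 * (j : ℝ) + 2) + 1 / (2 * n + 2) := by
          rw [div_add_div _ _ (by positivity) (by positivity), mul_comm (2 * (n : ℝ) + 2)]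
          refine div_le_div_of_nonneg_right ?_ (by positivity)
          push_cast
          linarith
      _ ≤ 1 / (2 * j + 1) + 1 / (2 * n + 1) := by gcongr <;> norm_num
      _ ≤ _ := add_le_add_right hNn _
  calc _ = (2 * ((n + j : ℕ) : ℝ) + 1) / ((2 * n + 1) * (2 * j + 1)) *
        ((2 * ((n + j : ℕ) : ℝ) + 2) / ((2 * n + 2) * (2 * j + 2))) := by
          rw [div_mul_div_comm, div_div]
          congr 1
          ring
    _ ≤ _ := by
        rw [sq]
        gcongr

lemma prod_mul_pow_div_factorial_le (hb : ∀ n, 0 < b n)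
    (hanti : Antitone fun n : ℕ => b n / ((2 * n + 1) * (2 * n + 2))) {N n : ℕ} (hn : N ≤ n)
    (ha : 0 < a n) (hab : a n * b n ≤ 2) (x : ℝ) (k : ℕ) :
    (∏ j ∈ Finset.range k, a n * b (n + j)) * (x ^ (2 * k) / (2 * k).factorial) ≤
      ∏ j ∈ Finset.range k, 2 * x ^ 2 * (1 / (2 * j + 1) + 1 / (2 * N + 1)) ^ 2 := by
  rw [pow_two_mul_div_factorial, ← Finset.prod_mul_distrib]
  refine Finset.prod_le_prod (fun j _ => ?_) fun j _ => ?_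
  · have := hb (n + j)
    positivity
  set P : ℝ := (2 * ((n + j : ℕ) : ℝ) + 1) * (2 * ((n + j : ℕ) : ℝ) + 2)
  have hP : 0 < P := by positivity
  have hbP : b (n + j) ≤ b n / ((2 * n + 1) * (2 * n + 2)) * P :=
    (div_le_iff₀ hP).1 (hanti (n.le_add_right j))
  calc a n * b (n + j) * (x ^ 2 / ((2 * j + 1) * (2 * j + 2)))
      ≤ a n * (b n / ((2 * n + 1) * (2 * n + 2)) * P) * (x ^ 2 / ((2 * j + 1) * (2 * j + 2))) := by
        gcongr
    _ = a n * b n * x ^ 2 * (P / ((2 * n + 1) * (2 * n + 2)) / ((2 * j + 1) * (2 * j + 2))) := by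
        ring
    _ ≤ 2 * x ^ 2 * (1 / (2 * j + 1) + 1 / (2 * N + 1)) ^ 2 := by
        gcongr
        exact two_mul_add_div_le hn j

lemma exists_summable_prod_range {x : ℝ} (hx : 0 < x) :
    ∃ N : ℕ, Summable fun k : ℕ =>
      ∏ j ∈ Finset.range k, 2 * x ^ 2 * (1 / (2 * j + 1) + 1 / (2 * N + 1) : ℝ) ^ 2 := by
  have htendsto : Tendsto (fun n : ℕ => 1 / (2 * (n : ℝ) + 1)) atTop (𝓝 0) :=
    tendsto_const_nhds.div_atTop <| tendsto_atTop_add_const_right _ _ <|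
      tendsto_natCast_atTop_atTop.const_mul_atTop two_pos
  have hlim (t : ℝ) : Tendsto (fun n : ℕ => 2 * x ^ 2 * (1 / (2 * (n : ℝ) + 1) + t) ^ 2) atTop
      (𝓝 (2 * x ^ 2 * t ^ 2)) := by
    simpa using ((htendsto.add_const t).pow 2).const_mul (2 * x ^ 2)
  have hN := hlim 0
  simp only [add_zero, ne_eq, OfNat.ofNat_ne_zero, not_false_eq_true, zero_pow, mul_zero] at hN
  obtain ⟨N, hN⟩ := (hN.eventually_lt_const one_pos).exists
  exact ⟨N, summable_prod_range_of_tendsto_lt_one hN (fun j => by positivity) (hlim _)⟩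

lemma tendstoLocallyUniformly_cos_of_hasSum {F : ℕ → ℂ → ℂ} (hb : ∀ n, 0 < b n)
    (hanti : Antitone fun n : ℕ => b n / ((2 * n + 1) * (2 * n + 2)))
    (hratio : Tendsto (fun n => b (n + 1) / b n) atTop (𝓝 1))
    (ha : Tendsto (fun n => a n * b n) atTop (𝓝 1))
    (hF : ∀ᶠ n in atTop, ∀ z, HasSum (fun k : ℕ =>
      ((∏ j ∈ Finset.range k, a n * b (n + j) : ℝ) : ℂ) *
        ((-1) ^ k * z ^ (2 * k) / (2 * k).factorial)) (F n z)) :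
    TendstoLocallyUniformly F Complex.cos atTop := by
  have hcos (R : ℝ) (hR : 0 < R) : TendstoUniformlyOn F Complex.cos atTop (Metric.ball 0 R) := by
    obtain ⟨N, hN⟩ := exists_summable_prod_range hR
    refine tendstoUniformlyOn_of_hasSum_mul (v := 1) (M := fun k => R ^ (2 * k) / (2 * k).factorial)
      (hF.mono fun n hn z _ => hn z) (fun z _ => by simpa using Complex.hasSum_cos z)
      (fun k => by positivity) (fun k z hz => ?_) (fun k => ?_) hN ?_
    · rw [norm_div, norm_mul, norm_pow, norm_neg, norm_one, one_pow, one_mul, norm_pow,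
        Complex.norm_natCast]
      gcongr
      exact (mem_ball_zero_iff.1 hz).le
    · have hprod := tendsto_finsetProd (Finset.range k) fun j _ =>
        tendsto_mul_add_of_tendsto_div_succ (fun n => (hb n).ne') hratio ha j
      rw [Finset.prod_const_one] at hprod
      exact_mod_cast (Complex.continuous_ofReal.tendsto _).comp hprod
    · filter_upwards [eventually_ge_atTop N, ha.eventually_const_lt one_pos,
        ha.eventually_le_const one_lt_two] with n hn hpos hle k
      have han : 0 < a n := pos_of_mul_pos_left hpos (hb n).le
      rw [Complex.norm_of_nonneg (Finset.prod_nonneg fun j _ => (mul_pos han (hb _)).le)]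
      exact prod_mul_pow_div_factorial_le hb hanti hn han hle R k
  rw [tendstoLocallyUniformly_iff_forall_isCompact]
  intro K hK
  obtain ⟨R, hR, hKR⟩ := hK.isBounded.subset_ball_lt 0 0
  exact (hcos R hR).mono hKR

end RescaledCosine

section TaylorRatio

open Topology

variable {f : ℂ → ℂ}

/-- The positive ratio `-γ_{2n+2} / γ_{2n}` of consecutive nonzero Taylor coefficients, whose
reciprocals are the model admissible sequence. -/
noncomputable def gamRatio (f : ℂ → ℂ) (n : ℕ) : ℝ :=
  evenCoeff f (n + 1) / evenCoeff f n * ((2 * n + 1) * (2 * n + 2))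

lemma EvenMinimalType.gam_two_mul_ne_zero (hf : EvenMinimalType f)
    (hn : Tendsto (nPlus f) atTop atTop) (n : ℕ) : gam f (2 * n) ≠ 0 := by
  rw [hf.gam_two_mul]
  exact mul_ne_zero (mul_ne_zero hf.ne_zero (Nat.cast_ne_zero.2 (Nat.factorial_ne_zero _)))
    (mul_ne_zero (pow_ne_zero _ (neg_ne_zero.2 one_ne_zero))
      (Complex.ofReal_ne_zero.2 (hf.evenCoeff_pos hn n).ne'))

lemma EvenMinimalType.gamRatio_pos (hf : EvenMinimalType f)
    (hn : Tendsto (nPlus f) atTop atTop) (n : ℕ) : 0 < gamRatio f n :=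
  mul_pos (div_pos (hf.evenCoeff_pos hn _) (hf.evenCoeff_pos hn _)) (by positivity)

lemma EvenMinimalType.antitone_gamRatio_div (hf : EvenMinimalType f)
    (hn : Tendsto (nPlus f) atTop atTop) :
    Antitone fun n : ℕ => gamRatio f n / ((2 * n + 1) * (2 * n + 2)) := by
  intro i j hij
  have hcancel (n : ℕ) : gamRatio f n / ((2 * n + 1) * (2 * n + 2)) =
      evenCoeff f (n + 1) / evenCoeff f n := mul_div_cancel_right₀ _ (by positivity)
  simp only [hcancel]
  rw [div_le_div_iff₀ (hf.evenCoeff_pos hn j) (hf.evenCoeff_pos hn i), mul_comm]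
  exact hf.evenCoeff_logConcave hij

lemma EvenMinimalType.tendsto_gamRatio_succ_div (hf : EvenMinimalType f)
    (hn : Tendsto (nPlus f) atTop atTop)
    (hcount : Tendsto (fun r => nPlus f (2 * r) - nPlus f r) atTop atTop) :
    Tendsto (fun n => gamRatio f (n + 1) / gamRatio f n) atTop (𝓝 1) := by
  have hshift (t : ℝ) :
      Tendsto (fun n : ℕ => 1 + 2 / (2 * (n : ℝ) + t)) atTop (𝓝 1) := by
    simpa using (tendsto_const_nhds (x := (2 : ℝ)).div_atTop <|
      tendsto_atTop_add_const_right _ t <|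
        tendsto_natCast_atTop_atTop.const_mul_atTop two_pos).const_add 1
  have hlim := (hf.tendsto_evenCoeff_mul_div_sq hn hcount).mul
    ((hshift 1).mul (hshift 2))
  rw [mul_one, mul_one] at hlim
  refine hlim.congr fun n => ?_
  have h₀ := (hf.evenCoeff_pos hn n).ne'
  have h₁ := (hf.evenCoeff_pos hn (n + 1)).ne'
  rw [gamRatio, gamRatio, Nat.cast_succ]
  field_simp
  ring

lemma EvenMinimalType.gam_two_mul_succ (hf : EvenMinimalType f)
    (hn : Tendsto (nPlus f) atTop atTop) (n : ℕ) :
    gam f (2 * (n + 1)) = -gamRatio f n * gam f (2 * n) := by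
  have hne : (evenCoeff f n : ℂ) ≠ 0 := Complex.ofReal_ne_zero.2 (hf.evenCoeff_pos hn n).ne'
  rw [hf.gam_two_mul, hf.gam_two_mul, gamRatio, mul_add_one, Nat.factorial_succ, Nat.factorial_succ]
  push_cast
  field_simp
  ring

lemma EvenMinimalType.gam_two_mul_add (hf : EvenMinimalType f)
    (hn : Tendsto (nPlus f) atTop atTop) (n k : ℕ) :
    gam f (2 * (n + k)) =
      (-1) ^ k * ((∏ j ∈ Finset.range k, gamRatio f (n + j) : ℝ) : ℂ) * gam f (2 * n) := by
  induction k with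
  | zero => simp
  | succ k ih =>
    rw [← add_assoc, hf.gam_two_mul_succ hn, ih, Finset.prod_range_succ]
    push_cast
    ring

lemma hasSum_iteratedDeriv_two_mul_of_even (hf : Differentiable ℂ f) (hev : Function.Even f)
    (n : ℕ) (z : ℂ) :
    HasSum (fun k => gam f (2 * (n + k)) * z ^ (2 * k) / (2 * k).factorial)
      (iteratedDeriv (2 * n) f z) := by
  have heven : Function.Even (iteratedDeriv (2 * n) f) := fun w => by
    have hneg := iteratedDeriv_comp_neg (2 * n) f w
    rw [funext hev, (even_two_mul n).neg_one_pow, one_smul] at hneg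
    exact hneg.symm
  have hgam (k : ℕ) : gam (iteratedDeriv (2 * n) f) (2 * k) = gam f (2 * (n + k)) := by
    rw [gam, gam, mul_add, add_comm]
    simp only [iteratedDeriv_eq_iterate, Function.iterate_add_apply]
  simpa only [hgam] using hasSum_gam_of_even
    ((hf.contDiff (n := ⊤)).differentiable_iteratedDeriv _ (WithTop.coe_lt_top _)) heven z

lemma EvenMinimalType.hasSum_rescaled_iteratedDeriv (hf : EvenMinimalType f)
    (hn : Tendsto (nPlus f) atTop atTop) {t : ℝ} (ht : 0 ≤ t) (n : ℕ) (z : ℂ) :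
    HasSum (fun k : ℕ => ((∏ j ∈ Finset.range k, t * gamRatio f (n + j) : ℝ) : ℂ) *
        ((-1) ^ k * z ^ (2 * k) / (2 * k).factorial))
      (1 / gam f (2 * n) * iteratedDeriv (2 * n) f ((√t : ℝ) * z)) := by
  refine ((hasSum_iteratedDeriv_two_mul_of_even hf.entire hf.even n _).mul_left _).congr_fun
    fun k => ?_
  have hsqrt : ((√t : ℝ) : ℂ) ^ (2 * k) = (t : ℂ) ^ k := by
    rw [pow_mul, ← Complex.ofReal_pow, Real.sq_sqrt ht]
  have hne := hf.gam_two_mul_ne_zero hn n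
  rw [hf.gam_two_mul_add hn, mul_pow, hsqrt, Finset.prod_mul_distrib, Finset.prod_const,
    Finset.card_range]
  push_cast
  field_simp

end TaylorRatio

section ZeroDensity

open Topology

variable {f : ℂ → ℂ} {α : ℝ} {h : ℝ → ℝ}

lemma tendsto_atTop_of_tendsto_two_mul_sub {F : ℝ → ℝ} (hF : ∀ r, 0 ≤ F r)
    (hdiff : Tendsto (fun r => F (2 * r) - F r) atTop atTop) : Tendsto F atTop atTop := by
  have htwice : Tendsto (fun r => F (2 * r)) atTop atTop :=
    tendsto_atTop_mono (fun r => sub_le_self _ (hF r)) hdiff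
  refine (htwice.comp (tendsto_id.atTop_div_const two_pos)).congr fun r => ?_
  simp only [Function.comp_apply, id_eq, mul_div_cancel₀ r two_ne_zero]

lemma tendsto_atTop_of_tendsto_two_mul_div {F : ℝ → ℝ} {L : ℝ} (hmono : Monotone F)
    (hpos : ∀ᶠ r in atTop, 0 < F r) (hL : 1 < L)
    (hdiv : Tendsto (fun r => F (2 * r) / F r) atTop (𝓝 L)) : Tendsto F atTop atTop := by
  obtain ⟨q, hq, hqL⟩ := exists_between hL
  obtain ⟨r₀, hr₀⟩ := eventually_atTop.1
    ((hpos.and (hdiv.eventually_const_lt hqL)).and (eventually_gt_atTop 0))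
  obtain ⟨⟨hFr₀, -⟩, hr₀pos⟩ := hr₀ r₀ le_rfl
  have hgrow (k : ℕ) : q ^ k * F r₀ ≤ F (2 ^ k * r₀) := by
    induction k with
    | zero => simp
    | succ k ih =>
      obtain ⟨⟨hFk, hlt⟩, -⟩ :=
        hr₀ (2 ^ k * r₀) (le_mul_of_one_le_left hr₀pos.le (one_le_pow₀ one_le_two))
      calc q ^ (k + 1) * F r₀ = q * (q ^ k * F r₀) := by ring
        _ ≤ q * F (2 ^ k * r₀) := by gcongr
        _ ≤ F (2 * (2 ^ k * r₀)) := ((lt_div_iff₀ hFk).1 hlt).le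
        _ = F (2 ^ (k + 1) * r₀) := by rw [pow_succ', mul_assoc]
  refine tendsto_atTop_atTop_of_monotone hmono fun b => ?_
  obtain ⟨k, hk⟩ :=
    (((tendsto_pow_atTop_atTop_of_one_lt hq).atTop_mul_const hFr₀).eventually_ge_atTop b).exists
  exact ⟨_, hk.trans (hgrow k)⟩

lemma tendsto_two_mul_sub_atTop_of_tendsto_div {F : ℝ → ℝ} {L : ℝ} (hmono : Monotone F)
    (hpos : ∀ᶠ r in atTop, 0 < F r) (hL : 1 < L)
    (hdiv : Tendsto (fun r => F (2 * r) / F r) atTop (𝓝 L)) :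
    Tendsto (fun r => F (2 * r) - F r) atTop atTop := by
  have hF := tendsto_atTop_of_tendsto_two_mul_div hmono hpos hL hdiv
  refine (hF.atTop_mul_pos (sub_pos.2 hL) (hdiv.sub_const 1)).congr' ?_
  filter_upwards [hpos] with r hr
  rw [mul_sub_one, mul_div_cancel₀ _ hr.ne']

lemma SlowlyVarying.tendsto_two_mul_div (hh : SlowlyVarying h) {F : ℝ → ℝ}
    (hF : Tendsto (fun r => F r / (h r * r ^ α)) atTop (𝓝 1)) :
    Tendsto (fun r => F (2 * r) / F r) atTop (𝓝 (2 ^ α)) := by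
  have hF₂ := hF.comp (tendsto_id.const_mul_atTop two_pos)
  have hlim := ((hF₂.div hF one_ne_zero).mul (hh.2 2 two_pos)).mul_const (2 ^ α)
  rw [div_one, one_mul, one_mul] at hlim
  refine hlim.congr' ?_
  filter_upwards [eventually_gt_atTop 0] with r hr
  have hhr := hh.1 r hr
  have hh2r := hh.1 (2 * r) (by positivity)
  simp only [Pi.div_apply, Function.comp_apply, id_eq]
  rw [Real.mul_rpow two_pos.le hr.le]
  field_simp

lemma AssumptionA.tendsto_nPlus_two_mul_sub (hf : AssumptionA f α h) :
    Tendsto (fun r => nPlus f (2 * r) - nPlus f r) atTop atTop := by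
  refine tendsto_two_mul_sub_atTop_of_tendsto_div (monotone_nPlus hf.entire hf.ne_zero) ?_
    (Real.one_lt_rpow one_lt_two hf.alpha_mem.1) (hf.slowly.tendsto_two_mul_div hf.density)
  filter_upwards [hf.density.eventually_const_lt one_pos, eventually_gt_atTop 0] with r hpos hr
  exact (div_pos_iff_of_pos_right (mul_pos (hf.slowly.1 r hr) (Real.rpow_pos_of_pos hr α))).1 hpos

lemma eventually_rpow_le_mul_sq {ρ ε : ℝ} (hρ : ρ < 2) (hε : 0 < ε) :
    ∀ᶠ x : ℝ in atTop, x ^ ρ ≤ ε * x ^ 2 := by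
  filter_upwards [(tendsto_rpow_neg_atTop (sub_pos.2 hρ)).eventually_le_const hε,
    eventually_gt_atTop 0] with x hle hx
  rwa [neg_sub, Real.rpow_sub hx, Real.rpow_two, div_le_iff₀ (by positivity)] at hle

lemma AssumptionA.evenMinimalType (hf : AssumptionA f α h) : EvenMinimalType f where
  entire := hf.entire
  minimalType ε hε := by
    obtain ⟨ρ, hρ, C, hC, hle⟩ := hf.order
    obtain ⟨R, hR⟩ := eventually_atTop.1 (eventually_rpow_le_mul_sq hρ hε)
    obtain ⟨M, hM⟩ := (isCompact_closedBall (0 : ℂ) R).exists_bound_of_continuousOn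
      hf.entire.continuous.continuousOn
    refine ⟨max C M, fun z => ?_⟩
    rcases le_total R ‖z‖ with hRz | hzR
    · calc ‖f z‖ ≤ C * Real.exp (‖z‖ ^ ρ) := hle z
        _ ≤ max C M * Real.exp (ε * ‖z‖ ^ 2) := by
          gcongr
          exacts [le_max_left C M, hR _ hRz]
    · calc ‖f z‖ ≤ max C M := (hM z (mem_closedBall_zero_iff.2 hzR)).trans (le_max_right C M)
        _ ≤ max C M * Real.exp (ε * ‖z‖ ^ 2) :=
          le_mul_of_one_le_right (hC.le.trans (le_max_left C M))
            (Real.one_le_exp (by positivity))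
  even := hf.even
  ne_zero := hf.ne_zero
  realZeros := hf.realZeros

end ZeroDensity

theorem stmt0_general {f : ℂ → ℂ} (hf : EvenMinimalType f)
    (hcount : Tendsto (fun r => nPlus f (2 * r) - nPlus f r) atTop atTop) {a : ℕ → ℝ}
    (ha : Tendsto (fun n : ℕ => -(a n : ℂ) * gam f (2 * (n + 1)) / gam f (2 * n))
      atTop (nhds 1)) :
    TendstoLocallyUniformly
      (fun (n : ℕ) (z : ℂ) =>
        (1 / gam f (2 * n)) * iteratedDeriv (2 * n) f (((Real.sqrt (a n) : ℝ) : ℂ) * z))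
      (fun z => Complex.cos z) atTop := by
  have hn : Tendsto (nPlus f) atTop atTop :=
    tendsto_atTop_of_tendsto_two_mul_sub (fun r => tsum_nonneg fun _ => Nat.cast_nonneg _) hcount
  have hab : Tendsto (fun n => a n * gamRatio f n) atTop (nhds 1) := by
    refine ((Complex.continuous_re.tendsto _).comp ha).congr fun n => ?_
    rw [Function.comp_apply, hf.gam_two_mul_succ hn, neg_mul, neg_mul, mul_neg, neg_neg,
      ← mul_assoc, mul_div_cancel_right₀ _ (hf.gam_two_mul_ne_zero hn n), ← Complex.ofReal_mul,
      Complex.ofReal_re]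
  refine tendstoLocallyUniformly_cos_of_hasSum (hf.gamRatio_pos hn) (hf.antitone_gamRatio_div hn)
    (hf.tendsto_gamRatio_succ_div hn hcount) hab ?_
  filter_upwards [hab.eventually_const_lt one_pos] with n hpos z
  exact hf.hasSum_rescaled_iteratedDeriv hn
    (pos_of_mul_pos_left hpos (hf.gamRatio_pos hn n).le).le n z

/-- Cosine universality for even entire functions. -/
theorem stmt0 (f : ℂ → ℂ) (α : ℝ) (h : ℝ → ℝ) (hf : AssumptionA f α h)
    (a : ℕ → ℝ) (hapos : ∀ᶠ n in atTop, 0 < a n)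
    (ha : Tendsto (fun n : ℕ => -(a n : ℂ) * gam f (2 * (n + 1)) / gam f (2 * n))
      atTop (nhds 1)) :
    TendstoLocallyUniformly
      (fun (n : ℕ) (z : ℂ) =>
        (1 / gam f (2 * n)) * iteratedDeriv (2 * n) f (((Real.sqrt (a n) : ℝ) : ℂ) * z))
      (fun z => Complex.cos z) atTop :=
  stmt0_general hf.evenMinimalType hf.tendsto_nPlus_two_mul_sub ha
end

section
/- For each m ∈ ℕ let P_m be a monic polynomial of degree m with only real roots, and assume m_1(P_m) → a ∈ ℝ and m_2(P_m) = o(m) as m → ∞. Then for every d ∈ ℕ, (1/(n+d)_n) · (d/dz)^n P_{d+n}(z) → (z − a)^d as n → ∞, uniformly on compact subsets of the complex plane. -/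
open Filter Polynomial

/-- `j`-th moment of the empirical root measure of `p`. -/
noncomputable def mom (p : Polynomial ℂ) (j : ℕ) : ℂ :=
  (p.roots.map (fun z => z ^ j)).sum / (p.natDegree : ℂ)

/-- `n`-th derivative of a polynomial. -/
noncomputable def dern (n : ℕ) (p : Polynomial ℂ) : Polynomial ℂ :=
  (fun q => Polynomial.derivative q)^[n] p

/-!
The `k`-th elementary symmetric mean of the roots of a monic polynomial of degree `N` is the `k`-th
elementary symmetric polynomial divided by `N.choose k`. Differentiating and normalizing to a monic
polynomial preserves these means, so the coefficients of `(1 / (n + d)_n) • P^(n)` are, up to the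
signed binomial coefficients of `d`, the elementary symmetric means of order at most `d` of
`P = P_(d + n)` itself. When the roots of `P_m` are rescaled by `1 / m`, their first power sum tends
to `a` and all higher ones to `0`. By Newton's identities the `k`-th elementary symmetric polynomial
then tends to `a ^ k / k!`, so the `k`-th mean of the original roots tends to `a ^ k`, which is the
`k`-th mean of the roots of `(z - a) ^ d`.

For real roots the second moment controls the higher ones: the power sums satisfy
`|p_j| ≤ p_2 ^ (j / 2)` for `j ≥ 2`.
-/

open scoped Topology
open Finset.HasAntidiagonal (antidiagonal mem_antidiagonal)

/-- The `k`-th power sum of a multiset: the numerator of the moment `mom`, and the quantity that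
Newton's identities relate to `Multiset.esymm`. -/
def powerSum {R : Type*} [Semiring R] (s : Multiset R) (k : ℕ) : R :=
  (s.map (· ^ k)).sum

theorem succ_mul_esymm_succ {R : Type*} [CommRing R] (s : Multiset R) (k : ℕ) :
    (k + 1) * s.esymm (k + 1) =
      ∑ b ∈ antidiagonal k, (-1) ^ b.2 * s.esymm b.1 * powerSum s (b.2 + 1) := by
  classical
  have aeval_psum (j : ℕ) :
      MvPolynomial.aeval (fun x : s => (x : R)) (MvPolynomial.psum s R j) = powerSum s j := by
    simp only [MvPolynomial.psum, map_sum, map_pow, MvPolynomial.aeval_X]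
    exact congrArg Multiset.sum (Multiset.map_univ s (· ^ j))
  have newton := congrArg (MvPolynomial.aeval (fun x : s => (x : R)))
    (MvPolynomial.mul_esymm_eq_sum s R (k + 1))
  simp only [map_mul, map_sum, map_pow, map_neg, map_one, map_natCast, aeval_psum,
    MvPolynomial.aeval_esymm_eq_multiset_esymm, Multiset.map_univ_coe] at newton
  rw [Finset.sum_filter, Finset.Nat.sum_antidiagonal_succ', if_neg (lt_irrefl _), zero_add,
    Finset.mul_sum] at newton
  rw [← Nat.cast_succ, newton]
  refine Finset.sum_congr rfl fun b hb => ?_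
  obtain rfl := mem_antidiagonal.1 hb
  have sign : (-1 : R) ^ (b.1 + b.2 + 1 + 1) * (-1) ^ b.1 = (-1) ^ b.2 := by
    rw [← pow_add, show b.1 + b.2 + 1 + 1 + b.1 = 2 * (b.1 + 1) + b.2 by ring, pow_add, pow_mul,
      neg_one_sq, one_pow, one_mul]
  rw [if_pos (by omega), ← mul_assoc, ← mul_assoc, sign]

theorem powerSum_map_div {K : Type*} [Semifield K] (s : Multiset K) (c : K) (k : ℕ) :
    powerSum (s.map (· / c)) k = powerSum s k / c ^ k := by
  simp only [powerSum, Multiset.map_map, Function.comp_def, div_pow, Multiset.sum_map_div]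

theorem esymm_map_div {K : Type*} [Semifield K] (s : Multiset K) (c : K) (k : ℕ) :
    (s.map (· / c)).esymm k = s.esymm k / c ^ k := by
  simpa only [smul_eq_mul, inv_pow, inv_mul_eq_div] using (s.pow_smul_esymm c⁻¹ k).symm

theorem powerSum_norm_two_nonneg {R : Type*} [SeminormedRing R] (s : Multiset R) :
    0 ≤ powerSum (s.map norm) 2 :=
  Multiset.sum_nonneg (Multiset.forall_mem_map_iff.2 fun x _ => sq_nonneg x)

theorem norm_le_sqrt_powerSum_norm {R : Type*} [SeminormedRing R] {s : Multiset R} {z : R}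
    (hz : z ∈ s) : ‖z‖ ≤ √(powerSum (s.map norm) 2) :=
  Real.le_sqrt_of_sq_le <| Multiset.single_le_sum
    (Multiset.forall_mem_map_iff.2 fun x _ => sq_nonneg x) _
    (Multiset.mem_map_of_mem _ (Multiset.mem_map_of_mem _ hz))

theorem norm_powerSum_le_sqrt_pow {R : Type*} [SeminormedRing R] (s : Multiset R) {j : ℕ}
    (hj : 2 ≤ j) : ‖powerSum s j‖ ≤ √(powerSum (s.map norm) 2) ^ j := by
  set r := √(powerSum (s.map norm) 2)
  have sq_r : r ^ 2 = (s.map (‖·‖ ^ 2)).sum := by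
    rw [Real.sq_sqrt (powerSum_norm_two_nonneg s), powerSum, Multiset.map_map]
    rfl
  calc ‖powerSum s j‖
      ≤ (s.map (‖· ^ j‖)).sum := by
        simpa only [powerSum, Multiset.map_map, Function.comp_def] using
          norm_multiset_sum_le (s.map (· ^ j))
    _ ≤ (s.map (r ^ (j - 2) * ‖·‖ ^ 2)).sum := by
        refine Multiset.sum_map_le_sum_map _ _ fun z hz => ?_
        calc ‖z ^ j‖ ≤ ‖z‖ ^ j := norm_pow_le' z (by omega)
          _ = ‖z‖ ^ (j - 2) * ‖z‖ ^ 2 := (pow_sub_mul_pow _ hj).symm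
          _ ≤ r ^ (j - 2) * ‖z‖ ^ 2 := by
            gcongr
            exact norm_le_sqrt_powerSum_norm hz
    _ = r ^ j := by rw [Multiset.sum_map_mul_left, ← sq_r, pow_sub_mul_pow _ hj]

theorem powerSum_norm_two_of_im_eq_zero {s : Multiset ℂ} (hs : ∀ z ∈ s, z.im = 0) :
    powerSum (s.map norm) 2 = ‖powerSum s 2‖ := by
  have hsum : powerSum s 2 = (powerSum (s.map norm) 2 : ℝ) := by
    rw [powerSum, powerSum, ← Complex.ofRealHom_eq_coe, map_multiset_sum, Multiset.map_map,
      Multiset.map_map]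
    refine congrArg _ (Multiset.map_congr rfl fun z hz => ?_)
    have hz_re : z = z.re := Complex.ext rfl (hs z hz)
    simp only [Function.comp_apply, Complex.ofRealHom_eq_coe]
    rw [hz_re, Complex.norm_real, Real.norm_eq_abs, sq_abs, Complex.ofReal_pow]
  rw [hsum, Complex.norm_real, Real.norm_of_nonneg (powerSum_norm_two_nonneg s)]

/-- The `k`-th elementary symmetric mean of a multiset: the average of the products of its
`k`-element sub-multisets. It is `0` for `k` larger than the cardinality, since then the
binomial coefficient vanishes. -/
noncomputable def esymmMean {K : Type*} [Semifield K] (s : Multiset K) (k : ℕ) : K :=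
  s.esymm k / (s.card.choose k : K)

theorem descFactorial_mul_choose_sub {n d k : ℕ} (hk : k ≤ d) :
    (k + n).descFactorial n * (n + d).choose (d - k) = (n + d).descFactorial n * d.choose k := by
  have h := Nat.choose_mul (n := n + d) (k := k + n) (s := n) (Nat.le_add_left n k)
  rw [Nat.choose_symm_of_eq_add (show n + d = (k + n) + (d - k) by omega),
    Nat.add_sub_cancel_left, Nat.add_sub_cancel] at h
  rw [Nat.descFactorial_eq_factorial_mul_choose, Nat.descFactorial_eq_factorial_mul_choose,
    mul_assoc, mul_assoc, ← h, mul_comm ((n + d).choose _)]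

theorem coeff_iterate_derivative_eq_esymmMean {K : Type*} [Field K] [CharZero K] {p : K[X]}
    (hp : p.Monic) (hsplits : p.Splits) {n d k : ℕ} (hdeg : p.natDegree = n + d) (hk : k ≤ d) :
    (1 / ((n + d).descFactorial n : K)) * (derivative^[n] p).coeff k =
      (-1) ^ (d - k) * d.choose k * esymmMean p.roots (d - k) := by
  have hcard : p.roots.card = n + d := hsplits.natDegree_eq_card_roots.symm.trans hdeg
  have desc_ne : ((n + d).descFactorial n : K) ≠ 0 :=
    Nat.cast_ne_zero.2 (Nat.descFactorial_pos.2 (Nat.le_add_right n d)).ne'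
  have choose_ne : ((n + d).choose (d - k) : K) ≠ 0 :=
    Nat.cast_ne_zero.2 (Nat.choose_pos (by omega)).ne'
  have hratio : ((k + n).descFactorial n : K) * (n + d).choose (d - k) =
      (n + d).descFactorial n * d.choose k := by
    exact_mod_cast descFactorial_mul_choose_sub hk
  rw [coeff_iterate_derivative, coeff_eq_esymm_roots_of_splits hsplits (by omega),
    hp.leadingCoeff, hdeg, show n + d - (k + n) = d - k by omega, esymmMean, hcard, nsmul_eq_mul]
  field_simp
  linear_combination p.roots.esymm (d - k) * hratio

theorem tendsto_esymm_of_tendsto_powerSum {K ι : Type*} [Field K] [CharZero K] [TopologicalSpace K]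
    [IsTopologicalRing K] {l : Filter ι} {s : ι → Multiset K} {a : K}
    (h1 : Tendsto (fun i => powerSum (s i) 1) l (𝓝 a))
    (h2 : ∀ j, 2 ≤ j → Tendsto (fun i => powerSum (s i) j) l (𝓝 0)) (k : ℕ) :
    Tendsto (fun i => (s i).esymm k) l (𝓝 (a ^ k / k.factorial)) := by
  induction k using Nat.strong_induction_on with
  | _ k ih =>
  rcases k with _ | k
  · simpa [Multiset.esymm] using tendsto_const_nhds
  have succ_ne : (k : K) + 1 ≠ 0 := Nat.cast_add_one_ne_zero k
  have newton (i : ι) : (s i).esymm (k + 1) = (∑ b ∈ antidiagonal k,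
      (-1) ^ b.2 * (s i).esymm b.1 * powerSum (s i) (b.2 + 1)) / (k + 1) := by
    rw [eq_div_iff succ_ne, mul_comm, succ_mul_esymm_succ]
  have hterm : ∀ b ∈ antidiagonal k,
      Tendsto (fun i => (-1) ^ b.2 * (s i).esymm b.1 * powerSum (s i) (b.2 + 1)) l
        (𝓝 (if b = (k, 0) then a ^ k / k.factorial * a else 0)) := by
    rintro ⟨b, j⟩ hb
    obtain rfl : b + j = k := mem_antidiagonal.1 hb
    have hesymm := (ih b (by omega)).const_mul ((-1) ^ j)
    rcases j with _ | j
    · simpa using hesymm.mul h1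
    · simpa using hesymm.mul (h2 (j + 2) (by omega))
  have hmem : (k, 0) ∈ antidiagonal k := by simp
  have hlim := (tendsto_finsetSum _ hterm).div_const ((k : K) + 1)
  rw [Finset.sum_ite_eq' _ (k, 0), if_pos hmem] at hlim
  have limit_eq : a ^ k / k.factorial * a / (k + 1) = a ^ (k + 1) / (k + 1).factorial := by
    rw [Nat.factorial_succ, Nat.cast_mul, Nat.cast_succ, div_mul_eq_mul_div, div_div, pow_succ,
      mul_comm ((k : K) + 1)]
  simpa only [newton, limit_eq] using hlim

theorem tendsto_pow_div_factorial_div_choose (𝕜 : Type*) [RCLike 𝕜] (k : ℕ) :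
    Tendsto (fun m : ℕ => (m : 𝕜) ^ k / k.factorial / m.choose k) atTop (𝓝 1) := by
  have choose_ne : ∀ᶠ m : ℕ in atTop, (m.choose k : ℝ) ≠ 0 := by
    filter_upwards [eventually_ge_atTop k] with m hm
    exact Nat.cast_ne_zero.2 (Nat.choose_pos hm).ne'
  have hreal := (Asymptotics.isEquivalent_iff_tendsto_one choose_ne).1 (isEquivalent_choose k).symm
  simpa [Function.comp_def] using ((RCLike.continuous_ofReal (K := 𝕜)).tendsto 1).comp hreal

theorem tendsto_esymmMean_of_tendsto_powerSum {𝕜 ι : Type*} [RCLike 𝕜] {l : Filter ι}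
    {s : ι → Multiset 𝕜} {a : 𝕜} (hcard : Tendsto (fun i => (s i).card) l atTop)
    (h1 : Tendsto (fun i => powerSum (s i) 1 / (s i).card) l (𝓝 a))
    (h2 : ∀ j, 2 ≤ j → Tendsto (fun i => powerSum (s i) j / ((s i).card : 𝕜) ^ j) l (𝓝 0))
    (k : ℕ) : Tendsto (fun i => esymmMean (s i) k) l (𝓝 (a ^ k)) := by
  have hesymm : Tendsto (fun i => (s i).esymm k / ((s i).card : 𝕜) ^ k) l
      (𝓝 (a ^ k / k.factorial)) := by
    simp_rw [← esymm_map_div]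
    refine tendsto_esymm_of_tendsto_powerSum ?_ ?_ k
    · simpa only [powerSum_map_div, pow_one] using h1
    · simpa only [powerSum_map_div] using h2
  have hlim := (hesymm.mul_const (k.factorial : 𝕜)).mul
    ((tendsto_pow_div_factorial_div_choose 𝕜 k).comp hcard)
  have factorial_ne : (k.factorial : 𝕜) ≠ 0 := Nat.cast_ne_zero.2 k.factorial_ne_zero
  rw [div_mul_cancel₀ _ factorial_ne, mul_one] at hlim
  refine hlim.congr' ?_
  filter_upwards [hcard.eventually_gt_atTop 0] with i hi
  have card_ne : ((s i).card : 𝕜) ≠ 0 := Nat.cast_ne_zero.2 hi.ne'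
  simp only [Function.comp_apply, esymmMean]
  field_simp

theorem tendstoLocallyUniformly_eval_of_tendsto_coeff {R ι : Type*} [Semiring R] [UniformSpace R]
    [IsTopologicalSemiring R] {l : Filter ι} {p : ι → R[X]} {q : R[X]} {d : ℕ}
    (hp : ∀ i, (p i).natDegree ≤ d) (hq : q.natDegree ≤ d)
    (h : ∀ k ≤ d, Tendsto (fun i => (p i).coeff k) l (𝓝 (q.coeff k))) :
    TendstoLocallyUniformly (fun i z => (p i).eval z) (fun z => q.eval z) l := by
  refine tendstoLocallyUniformly_iff_forall_tendsto.2 fun x => ?_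
  have hp_eval : Tendsto (fun y : ι × R => (p y.1).eval y.2) (l ×ˢ 𝓝 x) (𝓝 (q.eval x)) := by
    simp_rw [eval_eq_sum_range' (Nat.lt_succ_of_le (hp _)),
      eval_eq_sum_range' (Nat.lt_succ_of_le hq)]
    exact tendsto_finsetSum _ fun k hk =>
      ((h k (Finset.mem_range_succ_iff.1 hk)).comp tendsto_fst).mul (tendsto_snd.pow k)
  have hq_eval : Tendsto (fun y : ι × R => q.eval y.2) (l ×ˢ 𝓝 x) (𝓝 (q.eval x)) :=
    (q.continuous.tendsto x).comp tendsto_snd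
  exact (hq_eval.prodMk_nhds hp_eval).mono_right (nhds_le_uniformity _)

theorem norm_mom_le_of_im_eq_zero {p : ℂ[X]} (hp : ∀ z ∈ p.roots, z.im = 0) {j : ℕ} (hj : 2 ≤ j) :
    ‖mom p j‖ ≤ √(‖mom p 2‖ / p.natDegree) ^ j * (p.natDegree : ℝ) ^ (j - 1) := by
  have hmom (i : ℕ) : ‖mom p i‖ = ‖powerSum p.roots i‖ / p.natDegree := by
    rw [mom, norm_div, Complex.norm_natCast, powerSum]
  obtain hn | hn := Nat.eq_zero_or_pos p.natDegree
  · rw [hmom, hn, Nat.cast_zero, div_zero]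
    positivity
  have natDegree_pos : (0 : ℝ) < p.natDegree := Nat.cast_pos.2 hn
  have hbound := norm_powerSum_le_sqrt_pow p.roots hj
  rw [powerSum_norm_two_of_im_eq_zero hp] at hbound
  calc ‖mom p j‖ ≤ √‖powerSum p.roots 2‖ ^ j / p.natDegree := by rw [hmom]; gcongr
    _ = (√‖powerSum p.roots 2‖ / p.natDegree) ^ j * (p.natDegree : ℝ) ^ (j - 1) := by
      rw [div_pow, ← pow_sub_one_mul (show j ≠ 0 by omega) (p.natDegree : ℝ)]
      field_simp
    _ = √(‖mom p 2‖ / p.natDegree) ^ j * (p.natDegree : ℝ) ^ (j - 1) := by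
      rw [hmom, div_div, Real.sqrt_div (norm_nonneg _), Real.sqrt_mul_self natDegree_pos.le]

theorem isLittleO_mom_of_im_eq_zero {P : ℕ → ℂ[X]} (hdeg : ∀ m, (P m).natDegree = m)
    (hreal : ∀ m, ∀ z ∈ (P m).roots, z.im = 0)
    (h2 : (fun m => mom (P m) 2) =o[atTop] (fun m : ℕ => (m : ℂ))) {j : ℕ} (hj : 2 ≤ j) :
    (fun m => mom (P m) j) =o[atTop] (fun m : ℕ => (m : ℂ) ^ (j - 1)) := by
  have hratio : Tendsto (fun m : ℕ => √(‖mom (P m) 2‖ / m) ^ j) atTop (𝓝 0) := by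
    simpa [show j ≠ 0 by omega] using h2.tendsto_div_nhds_zero.norm.sqrt.pow j
  have hlittle := ((Asymptotics.isLittleO_one_iff ℝ).2 hratio).mul_isBigO
    (Asymptotics.isBigO_refl (fun m : ℕ => (m : ℝ) ^ (j - 1)) atTop)
  simp only [one_mul] at hlittle
  have hbound (m : ℕ) :
      ‖mom (P m) j‖ ≤ √(‖mom (P m) 2‖ / m) ^ j * (m : ℝ) ^ (j - 1) := by
    simpa only [hdeg] using norm_mom_le_of_im_eq_zero (hreal m) hj
  refine (Asymptotics.IsBigO.of_norm_le hbound).trans_isLittleO (hlittle.trans_le fun m => ?_)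
  simp only [norm_pow, RCLike.norm_natCast, le_refl]

theorem tendsto_esymmMean_of_tendsto_mom {P : ℕ → ℂ[X]} {a : ℂ} (hdeg : ∀ m, (P m).natDegree = m)
    (h1 : Tendsto (fun m => mom (P m) 1) atTop (𝓝 a))
    (h2 : ∀ j, 2 ≤ j → (fun m => mom (P m) j) =o[atTop] (fun m : ℕ => (m : ℂ) ^ (j - 1)))
    (k : ℕ) : Tendsto (fun m => esymmMean (P m).roots k) atTop (𝓝 (a ^ k)) := by
  have hcard (m : ℕ) : (P m).roots.card = m :=
    (IsAlgClosed.splits (P m)).natDegree_eq_card_roots.symm.trans (hdeg m)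
  have hmom (m j : ℕ) : mom (P m) j = powerSum (P m).roots j / m := by rw [mom, hdeg, powerSum]
  refine tendsto_esymmMean_of_tendsto_powerSum ?_ ?_ (fun j hj => ?_) k
  · exact tendsto_id.congr fun m => (hcard m).symm
  · simpa only [hcard, hmom] using h1
  · simpa only [hcard, hmom, div_div, mul_pow_sub_one (show j ≠ 0 by omega)]
      using (h2 j hj).tendsto_div_nhds_zero

theorem stmt3_general (P : ℕ → ℂ[X]) (a : ℂ)
    (hmonic : ∀ m, (P m).Monic) (hdeg : ∀ m, (P m).natDegree = m)
    (h1 : Tendsto (fun m => mom (P m) 1) atTop (𝓝 a))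
    (h2 : ∀ j, 2 ≤ j → (fun m => mom (P m) j) =o[atTop] (fun m : ℕ => (m : ℂ) ^ (j - 1)))
    (d : ℕ) :
    TendstoLocallyUniformly
      (fun (n : ℕ) (z : ℂ) =>
        (1 / ((n + d).descFactorial n : ℂ)) * (dern n (P (d + n))).eval z)
      (fun z => (z - a) ^ d) atTop := by
  have hlim := tendstoLocallyUniformly_eval_of_tendsto_coeff (l := atTop) (d := d)
    (p := fun n : ℕ => C (1 / ((n + d).descFactorial n : ℂ)) * dern n (P (d + n)))
    (q := (X + C (-a)) ^ d) (fun n => ?_) (natDegree_pow_X_add_C d (-a)).le fun k hk => ?_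
  · simpa only [eval_mul, eval_C, eval_pow, eval_add, eval_X, ← sub_eq_add_neg] using hlim
  · calc _ ≤ (derivative^[n] (P (d + n))).natDegree := natDegree_C_mul_le _ _
      _ ≤ d := by simpa [hdeg] using natDegree_iterate_derivative (P (d + n)) n
  · have hcoeff (n : ℕ) := coeff_iterate_derivative_eq_esymmMean (hmonic (d + n))
      (IsAlgClosed.splits _) ((hdeg (d + n)).trans (add_comm d n)) hk
    have hmean := (tendsto_esymmMean_of_tendsto_mom hdeg h1 h2 (d - k)).comp
      (tendsto_atTop_mono (Nat.le_add_left · d) tendsto_id)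
    simp only [coeff_C_mul, dern, hcoeff, coeff_X_add_C_pow]
    rw [neg_pow a, mul_right_comm]
    exact hmean.const_mul _

/-- Law of large numbers for repeated differentiation. -/
theorem stmt3 (P : ℕ → Polynomial ℂ) (a : ℝ)
    (hmonic : ∀ m, (P m).Monic) (hdeg : ∀ m, (P m).natDegree = m)
    (hreal : ∀ m, ∀ z ∈ (P m).roots, z.im = 0)
    (h1 : Tendsto (fun m => mom (P m) 1) atTop (nhds (a : ℂ)))
    (h2 : Asymptotics.IsLittleO atTop (fun m => mom (P m) 2) (fun m : ℕ => (m : ℂ)))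
    (d : ℕ) :
    TendstoLocallyUniformly
      (fun (n : ℕ) (z : ℂ) =>
        (1 / ((n + d).descFactorial n : ℂ)) * (dern n (P (d + n))).eval z)
      (fun z => (z - (a : ℂ)) ^ d) atTop :=
  stmt3_general P a hmonic hdeg h1 (fun _ hj => isLittleO_mom_of_im_eq_zero hdeg hreal h2 hj) d
end

section
/- For m ≥ 2 let P_m(z) := z^m − (m²/4)·z^{m−2}; these are monic real-rooted polynomials of degree m whose roots are 0 with multiplicity m−2 and ±m/2, so that m_1(P_m) = 0 and m_2(P_m) = m/2. For every fixed d ≥ 2, (1/(n+d)_n) · (d/dz)^n P_{d+n}(z) → z^d − (d(d−1)/4)·z^{d−2} as n → ∞, uniformly on compact subsets of the complex plane. In particular the limit differs from z^d = (z − 0)^d, so the hypothesis m_2(P_m) = o(m) in the law of large numbers for repeated differentiation cannot be dropped. -/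
open Filter Polynomial

/-- The counterexample polynomials `P_m(z) = z^m - (m²/4) z^(m-2)`. -/
noncomputable def Pcex (m : ℕ) : Polynomial ℂ :=
  Polynomial.X ^ m - Polynomial.C ((m : ℂ) ^ 2 / 4) * Polynomial.X ^ (m - 2)

/-!
Since `(N - k)_n (N)_k = (N)_{n+k} = (N - n)_k (N)_n`, the operator `(1 / (N)_n) (d/dz)^n` with
`N = d + n` sends `z^N` to `z^d` and `z^(N-k)` to `((d)_k / (N)_k) z^(d-k)`. As `(N)_k ~ N^k`, a
perturbation `a_N z^(N-k)` with `a_N ~ α N^k` therefore survives in the limit as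
`α (d)_k z^(d-k)`. The polynomial `P_m` is the case `k = 2`, `α = 1/4`, and its roots are read off
from `P_m = z^(m-2) (z - m/2) (z + m/2)`.
-/

section Derivative

theorem cast_descFactorial_ne_zero {R : Type*} [AddMonoidWithOne R] [CharZero R] {n k : ℕ}
    (hk : k ≤ n) : (n.descFactorial k : R) ≠ 0 :=
  Nat.cast_ne_zero.2 (Nat.descFactorial_pos.2 hk).ne'

theorem descFactorial_sub_mul_descFactorial (d n k : ℕ) :
    (d + n - k).descFactorial n * (d + n).descFactorial k =
      d.descFactorial k * (d + n).descFactorial n := by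
  have hk := Nat.descFactorial_mul_descFactorial (n := d + n) (Nat.le_add_left k n)
  have hn := Nat.descFactorial_mul_descFactorial (n := d + n) (Nat.le_add_right n k)
  simp only [Nat.add_sub_cancel, Nat.add_sub_cancel_left] at hk hn
  rw [hk, hn]

variable {K : Type*} [Field K] [CharZero K]

theorem descFactorial_sub_div_descFactorial {d n k : ℕ} (hk : k ≤ d + n) :
    ((d + n - k).descFactorial n : K) / (d + n).descFactorial n =
      d.descFactorial k / (d + n).descFactorial k := by
  have hn_ne : ((d + n).descFactorial n : K) ≠ 0 :=
    cast_descFactorial_ne_zero (Nat.le_add_left n d)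
  have hk_ne : ((d + n).descFactorial k : K) ≠ 0 :=
    cast_descFactorial_ne_zero hk
  rw [div_eq_div_iff hn_ne hk_ne]
  exact_mod_cast descFactorial_sub_mul_descFactorial d n k

theorem inv_descFactorial_mul_eval_iterate_derivative (d n k : ℕ) (a z : K) :
    ((d + n).descFactorial n : K)⁻¹ *
        (derivative^[n] (X ^ (d + n) - C a * X ^ (d + n - k))).eval z =
      z ^ d - a * ((d + n - k).descFactorial n / (d + n).descFactorial n) * z ^ (d - k) := by
  have hn_ne : ((d + n).descFactorial n : K) ≠ 0 :=
    cast_descFactorial_ne_zero (Nat.le_add_left n d)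
  have hexp : d + n - k - n = d - k := by lia
  rw [iterate_derivative_sub, iterate_derivative_C_mul, iterate_derivative_X_pow_eq_C_mul,
    iterate_derivative_X_pow_eq_C_mul, Nat.add_sub_cancel, hexp]
  simp only [eval_sub, eval_mul, eval_C, eval_pow, eval_X]
  field_simp

end Derivative

section Convergence

theorem tendstoLocallyUniformly_sub_mul {ι T R : Type*} [TopologicalSpace T]
    [WeaklyLocallyCompactSpace T] [Ring R] [UniformSpace R] [IsTopologicalRing R] {l : Filter ι}
    {c : ι → R} {c₀ : R} (hc : Tendsto c l (nhds c₀)) {f g : T → R} (hf : Continuous f)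
    (hg : Continuous g) :
    TendstoLocallyUniformly (fun i x => f x - c i * g x) (fun x => f x - c₀ * g x) l := by
  have h : Tendsto (fun i => (⟨f, hf⟩ : C(T, R)) - c i • ⟨g, hg⟩) l
      (nhds (⟨f, hf⟩ - c₀ • ⟨g, hg⟩)) :=
    tendsto_const_nhds.sub (hc.smul_const _)
  exact ContinuousMap.tendsto_iff_tendstoLocallyUniformly.1 h

variable {𝕜 : Type*} [RCLike 𝕜]

theorem tendsto_pow_div_descFactorial (k : ℕ) :
    Tendsto (fun m : ℕ => (m : 𝕜) ^ k / m.descFactorial k) atTop (nhds 1) := by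
  have hne : ∀ᶠ m : ℕ in atTop, (m.descFactorial k : ℝ) ≠ 0 := by
    filter_upwards [eventually_ge_atTop k] with m hm
    exact cast_descFactorial_ne_zero hm
  have hreal : Tendsto (fun m : ℕ => (m : ℝ) ^ k / m.descFactorial k) atTop (nhds 1) :=
    (Asymptotics.isEquivalent_iff_tendsto_one hne).1 (isEquivalent_descFactorial k).symm
  simpa [Function.comp_def] using
    (RCLike.continuous_ofReal (K := 𝕜)).continuousAt.tendsto.comp hreal

theorem tendsto_div_descFactorial {k : ℕ} {a : ℕ → 𝕜} {α : 𝕜}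
    (ha : Tendsto (fun m : ℕ => a m / (m : 𝕜) ^ k) atTop (nhds α)) :
    Tendsto (fun m : ℕ => a m / m.descFactorial k) atTop (nhds α) := by
  have h := ha.mul (tendsto_pow_div_descFactorial (𝕜 := 𝕜) k)
  rw [mul_one] at h
  refine h.congr' ?_
  filter_upwards [eventually_ne_atTop 0] with m hm
  exact div_mul_div_cancel₀ (pow_ne_zero k (Nat.cast_ne_zero.2 hm))

theorem tendsto_mul_descFactorial_div_descFactorial {k : ℕ} {a : ℕ → 𝕜} {α : 𝕜}
    (ha : Tendsto (fun m : ℕ => a m / (m : 𝕜) ^ k) atTop (nhds α)) (d : ℕ) :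
    Tendsto (fun n : ℕ => a (d + n) *
        (((d + n - k).descFactorial n : 𝕜) / (d + n).descFactorial n)) atTop
      (nhds (α * d.descFactorial k)) := by
  have hshift : Tendsto (fun n : ℕ => d + n) atTop atTop :=
    tendsto_atTop_mono (fun n => Nat.le_add_left n d) tendsto_id
  refine (((tendsto_div_descFactorial ha).comp hshift).mul_const _).congr' ?_
  filter_upwards [eventually_ge_atTop k] with n hn
  rw [Function.comp_apply, descFactorial_sub_div_descFactorial (le_add_left hn),
    div_mul_eq_mul_div, mul_div_assoc]

theorem tendstoLocallyUniformly_normalized_iterate_derivative {k : ℕ} {a : ℕ → 𝕜} {α : 𝕜}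
    (ha : Tendsto (fun m : ℕ => a m / (m : 𝕜) ^ k) atTop (nhds α)) (d : ℕ) :
    TendstoLocallyUniformly
      (fun (n : ℕ) (z : 𝕜) => ((d + n).descFactorial n : 𝕜)⁻¹ *
        (derivative^[n] (X ^ (d + n) - C (a (d + n)) * X ^ (d + n - k))).eval z)
      (fun z => z ^ d - α * d.descFactorial k * z ^ (d - k)) atTop := by
  simp only [inv_descFactorial_mul_eval_iterate_derivative]
  exact tendstoLocallyUniformly_sub_mul (tendsto_mul_descFactorial_div_descFactorial ha d)
    (continuous_pow d) (continuous_pow (d - k))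

end Convergence

section Roots

theorem monic_X_pow_sub_C_mul_X_pow {R : Type*} [Ring R] {n k : ℕ} (hk : k < n) (a : R) :
    (X ^ n - C a * X ^ k).Monic :=
  monic_X_pow_sub ((degree_C_mul_X_pow_le k a).trans_lt (mod_cast hk))

theorem X_pow_add_two_sub_C_sq_mul_X_pow {R : Type*} [CommRing R] (k : ℕ) (a : R) :
    X ^ (k + 2) - C (a ^ 2) * X ^ k = X ^ k * ((X - C a) * (X - C (-a))) := by
  simp only [map_pow, map_neg]
  ring

theorem roots_X_pow_add_two_sub_C_sq_mul_X_pow {R : Type*} [CommRing R] [IsDomain R] (k : ℕ)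
    (a : R) : (X ^ (k + 2) - C (a ^ 2) * X ^ k).roots = Multiset.replicate k 0 + {a, -a} := by
  have hne := (monic_X_pow_sub_C_mul_X_pow (lt_add_of_pos_right k two_pos) (a ^ 2)).ne_zero
  rw [X_pow_add_two_sub_C_sq_mul_X_pow] at hne ⊢
  rw [roots_mul hne, roots_mul (right_ne_zero_of_mul hne), roots_X_pow, roots_X_sub_C,
    roots_X_sub_C, Multiset.nsmul_singleton, Multiset.singleton_add, Multiset.insert_eq_cons]

theorem Pcex_eq {m : ℕ} (hm : 2 ≤ m) :
    Pcex m = X ^ (m - 2 + 2) - C (((m : ℂ) / 2) ^ 2) * X ^ (m - 2) := by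
  have hsq : ((m : ℂ) / 2) ^ 2 = (m : ℂ) ^ 2 / 4 := by ring
  rw [Nat.sub_add_cancel hm, hsq, Pcex]

theorem monic_Pcex {m : ℕ} (hm : 2 ≤ m) : (Pcex m).Monic :=
  monic_X_pow_sub_C_mul_X_pow (by lia) _

theorem roots_Pcex {m : ℕ} (hm : 2 ≤ m) :
    (Pcex m).roots = Multiset.replicate (m - 2) 0 + {(m : ℂ) / 2, -((m : ℂ) / 2)} := by
  rw [Pcex_eq hm, roots_X_pow_add_two_sub_C_sq_mul_X_pow]

theorem natDegree_Pcex {m : ℕ} (hm : 2 ≤ m) : (Pcex m).natDegree = m := by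
  rw [← IsAlgClosed.card_roots_eq_natDegree, roots_Pcex hm, Multiset.card_add,
    Multiset.card_replicate, Multiset.card_pair, Nat.sub_add_cancel hm]

theorem im_eq_zero_of_mem_roots_Pcex {m : ℕ} (hm : 2 ≤ m) {z : ℂ} (hz : z ∈ (Pcex m).roots) :
    z.im = 0 := by
  simp only [roots_Pcex hm, Multiset.mem_add, Multiset.insert_eq_cons, Multiset.mem_cons,
    Multiset.mem_singleton] at hz
  rcases hz with hz | rfl | rfl
  · rw [Multiset.eq_of_mem_replicate hz, Complex.zero_im]
  all_goals simp

theorem mom_Pcex {m : ℕ} (hm : 2 ≤ m) {j : ℕ} (hj : j ≠ 0) :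
    mom (Pcex m) j = (((m : ℂ) / 2) ^ j + (-((m : ℂ) / 2)) ^ j) / m := by
  simp [mom, roots_Pcex hm, natDegree_Pcex hm, hj]

theorem mom_one_Pcex {m : ℕ} (hm : 2 ≤ m) : mom (Pcex m) 1 = 0 := by
  simp [mom_Pcex hm]

theorem mom_two_Pcex {m : ℕ} (hm : 2 ≤ m) : mom (Pcex m) 2 = (m : ℂ) / 2 := by
  have hm₀ : (m : ℂ) ≠ 0 := Nat.cast_ne_zero.2 (by lia)
  rw [mom_Pcex hm two_ne_zero]
  field_simp
  ring

end Roots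

theorem pow_sub_mul_pow_ne_pow {R : Type*} [Ring R] {c : R} (hc : c ≠ 0) (d k : ℕ) :
    (fun z : R => z ^ d - c * z ^ k) ≠ fun z => z ^ d :=
  fun h => hc (by simpa using congrFun h 1)

theorem tendstoLocallyUniformly_dern_Pcex (d : ℕ) :
    TendstoLocallyUniformly
      (fun (n : ℕ) (z : ℂ) =>
        (1 / ((n + d).descFactorial n : ℂ)) * (dern n (Pcex (d + n))).eval z)
      (fun z => z ^ d - ((d : ℂ) * ((d : ℂ) - 1) / 4) * z ^ (d - 2)) atTop := by
  have hratio : Tendsto (fun m : ℕ => (m : ℂ) ^ 2 / 4 / (m : ℂ) ^ 2) atTop (nhds (1 / 4)) := by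
    refine tendsto_const_nhds.congr' ?_
    filter_upwards [eventually_ne_atTop 0] with m hm
    have hm₀ : (m : ℂ) ≠ 0 := Nat.cast_ne_zero.2 hm
    field_simp
  have hlim := tendstoLocallyUniformly_normalized_iterate_derivative hratio d
  have hcoeff : 1 / 4 * (d.descFactorial 2 : ℂ) = (d : ℂ) * ((d : ℂ) - 1) / 4 := by
    rw [Nat.cast_descFactorial_two]
    ring
  simp_rw [hcoeff] at hlim
  simpa only [dern, Pcex, one_div, add_comm] using hlim

/-- Optimality of the second moment hypothesis in the law of large numbers for
repeated differentiation. -/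
theorem stmt16 (d : ℕ) (hd : 2 ≤ d) :
    (∀ m : ℕ, 2 ≤ m →
      (Pcex m).Monic ∧ (Pcex m).natDegree = m ∧ (∀ z ∈ (Pcex m).roots, z.im = 0) ∧
        mom (Pcex m) 1 = 0 ∧ mom (Pcex m) 2 = (m : ℂ) / 2) ∧
    TendstoLocallyUniformly
      (fun (n : ℕ) (z : ℂ) =>
        (1 / ((n + d).descFactorial n : ℂ)) * (dern n (Pcex (d + n))).eval z)
      (fun z => z ^ d - ((d : ℂ) * ((d : ℂ) - 1) / 4) * z ^ (d - 2)) atTop ∧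
    (fun z : ℂ => z ^ d - ((d : ℂ) * ((d : ℂ) - 1) / 4) * z ^ (d - 2))
      ≠ (fun z : ℂ => (z - 0) ^ d) := by
  refine ⟨fun m hm => ⟨monic_Pcex hm, natDegree_Pcex hm, fun z => im_eq_zero_of_mem_roots_Pcex hm,
    mom_one_Pcex hm, mom_two_Pcex hm⟩, tendstoLocallyUniformly_dern_Pcex d, ?_⟩
  have hd₀ : (d : ℂ) ≠ 0 := Nat.cast_ne_zero.2 (by lia)
  have hd₁ : (d : ℂ) - 1 ≠ 0 := sub_ne_zero.2 (Nat.cast_ne_one.2 (by lia))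
  simpa only [sub_zero] using
    pow_sub_mul_pow_ne_pow (div_ne_zero (mul_ne_zero hd₀ hd₁) (OfNat.ofNat_ne_zero 4)) d (d - 2)
end
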